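/- arXiv:1709.04799 — 6 statements merged into one kernel-verified Lean document; each statement's English description precedes it below -/
import Mathlib

section
/- Under the standing hypotheses, for N ∈ ⟨Q⟩ with N > 1, let m_N be the least positive integer m with f(m) = N. Then m_N exists and factors as m_N = q₁^{ν₁}···q_r^{ν_r} for some r ≥ 1 with exponents ν₁ ≥ ν₂ ≥ … ≥ ν_r ≥ 1; in particular, every prime divisor of m_N lies in Q, and the primes dividing m_N are exactly the r smallest elements q₁ < q₂ < … < q_r of Q. -/
/-!
Two ways of shrinking `m` without changing `f m` force the shape of the least preimage. A prime
`p ∉ Q` dividing `m` contributes a factor `0` or `1` to `f m`; since `f m ≠ 0` it contributes `1`,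
and its full power can be removed. If `p < p'` are both in `Q` and `p'` occurs in `m` with the
larger exponent, interchanging the two exponents permutes the factors of `f m` and makes `m`
smaller. So only primes of `Q` occur, their exponents decrease along `Q`, and hence the primes that
occur form an initial segment of `Q`.
-/

/-- Multiplicativity in the sense of number theory. Unlike `ArithmeticFunction.IsMultiplicative`,
it does not impose `f 0 = 0`. -/
structure IsCoprimeMultiplicative {R : Type*} [MulOneClass R] (f : ℕ → R) : Prop where
  map_one : f 1 = 1
  map_mul_of_coprime : ∀ {m n : ℕ}, m.Coprime n → f (m * n) = f m * f n

theorem pow_mul_pow_lt_pow_mul_pow {R : Type*} [CommSemiring R] [PartialOrder R]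
    [IsStrictOrderedRing R] {x y : R} {a b : ℕ} (hx : 0 < x) (hxy : x < y) (hab : a < b) :
    x ^ b * y ^ a < x ^ a * y ^ b := by
  obtain ⟨k, rfl⟩ := Nat.exists_eq_add_of_le hab.le
  have hk : k ≠ 0 := by lia
  have hy : 0 < y := hx.trans hxy
  calc x ^ (a + k) * y ^ a = x ^ a * y ^ a * x ^ k := by ring
    _ < x ^ a * y ^ a * y ^ k := by gcongr
    _ = x ^ a * y ^ (a + k) := by ring

theorem exists_mem_eq_Icc_of_Icc_subset {α : Type*} [LinearOrder α] [LocallyFiniteOrder α]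
    {s : Finset α} {a : α} (hs : s.Nonempty) (hlower : ∀ i ∈ s, a ≤ i)
    (hsub : ∀ i ∈ s, Finset.Icc a i ⊆ s) : ∃ r ∈ s, s = Finset.Icc a r :=
  ⟨s.max' hs, s.max'_mem hs, Finset.Subset.antisymm
    (fun i hi => Finset.mem_Icc.2 ⟨hlower i hi, s.le_max' i hi⟩) (hsub _ (s.max'_mem hs))⟩

theorem exists_eq_pow_factorization_mul_pow_factorization_mul {p p' m : ℕ} (hp : p.Prime)
    (hp' : p'.Prime) (hne : p ≠ p') (hm : m ≠ 0) :
    ∃ d, 0 < d ∧ p.Coprime d ∧ p'.Coprime d ∧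
      m = p ^ m.factorization p * (p' ^ m.factorization p' * d) := by
  have hc : ordCompl[p] m ≠ 0 := (Nat.ordCompl_pos p hm).ne'
  have hfact : (ordCompl[p] m).factorization p' = m.factorization p' := by
    rw [Nat.factorization_ordCompl, Finsupp.erase_ne hne.symm]
  refine ⟨ordCompl[p'] (ordCompl[p] m), Nat.ordCompl_pos p' hc,
    (Nat.coprime_ordCompl hp hm).coprime_dvd_right (Nat.ordCompl_dvd _ p'),
    Nat.coprime_ordCompl hp' hc, ?_⟩
  rw [← hfact, Nat.ordProj_mul_ordCompl_eq_self, Nat.ordProj_mul_ordCompl_eq_self]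

section InitialSegment

variable {ι : Type*} [LinearOrder ι] [LocallyFiniteOrder ι] {q : ι → ℕ} {a : ι} {m : ℕ}

theorem exists_primeFactors_eq_image_Icc (hm : 1 < m) (hinj : Set.InjOn q (Set.Ici a))
    (hrange : ∀ p, p.Prime → p ∣ m → ∃ j, a ≤ j ∧ q j = p)
    (hanti : AntitoneOn (fun j => m.factorization (q j)) (Set.Ici a)) :
    ∃ r, a ≤ r ∧ m.primeFactors = (Finset.Icc a r).image q := by
  have hsubset : (m.primeFactors : Set ℕ) ⊆ q '' Set.Ici a := fun p hp =>
    hrange p (Nat.prime_of_mem_primeFactors hp) (Nat.dvd_of_mem_primeFactors hp)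
  obtain ⟨s, hs, hsq⟩ := Finset.subset_set_image_iff.1 hsubset
  have hne : s.Nonempty := by
    rw [← Finset.image_nonempty (f := q), hsq]
    exact Nat.nonempty_primeFactors.2 hm
  have hmem : ∀ j, a ≤ j → (j ∈ s ↔ 0 < m.factorization (q j)) := by
    intro j hj
    rw [Nat.pos_iff_ne_zero, ← Finsupp.mem_support_iff, Nat.support_factorization, ← hsq,
      ← Finset.mem_coe, ← Finset.mem_coe, Finset.coe_image, hinj.mem_image_iff hs hj]
  have hIcc : ∀ i ∈ s, Finset.Icc a i ⊆ s := by
    intro i hi j hj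
    obtain ⟨haj, hji⟩ := Finset.mem_Icc.1 hj
    exact (hmem j haj).2 (((hmem i (hs hi)).1 hi).trans_le (hanti haj (hs hi) hji))
  obtain ⟨r, hr, rfl⟩ := exists_mem_eq_Icc_of_Icc_subset hne (fun i hi => hs hi) hIcc
  exact ⟨r, hs hr, hsq.symm⟩

theorem exists_eq_prod_Icc_pow_factorization (hm : 1 < m) (hinj : Set.InjOn q (Set.Ici a))
    (hrange : ∀ p, p.Prime → p ∣ m → ∃ j, a ≤ j ∧ q j = p)
    (hanti : AntitoneOn (fun j => m.factorization (q j)) (Set.Ici a)) :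
    ∃ r, a ≤ r ∧ m = ∏ j ∈ Finset.Icc a r, q j ^ m.factorization (q j) ∧
      ∀ j ∈ Finset.Icc a r, 1 ≤ m.factorization (q j) := by
  obtain ⟨r, hr, hfactors⟩ := exists_primeFactors_eq_image_Icc hm hinj hrange hanti
  have hm0 : m ≠ 0 := by lia
  refine ⟨r, hr, ?_, fun j hj => ?_⟩
  · have hinjIcc : Set.InjOn q (Finset.Icc a r) :=
      hinj.mono fun j hj => (Finset.mem_Icc.1 hj).1
    rw [← Finset.prod_image (f := fun p => p ^ m.factorization p) hinjIcc, ← hfactors]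
    exact (Nat.prod_factorization_pow_eq_self hm0).symm
  · have hqj : q j ∈ m.primeFactors := hfactors ▸ Finset.mem_image_of_mem q hj
    exact (Nat.prime_of_mem_primeFactors hqj).factorization_pos_of_dvd hm0
      (Nat.dvd_of_mem_primeFactors hqj)

end InitialSegment

namespace IsCoprimeMultiplicative

variable {R : Type*} {f : ℕ → R} {m : ℕ} {N : R}

section MulOneClass

variable [MulOneClass R]

theorem map_ordProj_mul_map_ordCompl (hf : IsCoprimeMultiplicative f) {p : ℕ} (hp : p.Prime)
    (hm : m ≠ 0) : f (ordProj[p] m) * f (ordCompl[p] m) = f m := by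
  rw [← hf.map_mul_of_coprime ((Nat.coprime_ordCompl hp hm).pow_left _),
    Nat.ordProj_mul_ordCompl_eq_self]

theorem map_ordProj_ne_one_of_isLeast (hf : IsCoprimeMultiplicative f)
    (hleast : IsLeast {n | 0 < n ∧ f n = N} m) {p : ℕ} (hp : p.Prime) (hpm : p ∣ m) :
    f (ordProj[p] m) ≠ 1 := by
  intro hone
  have hm : m ≠ 0 := hleast.1.1.ne'
  have hmap : f (ordCompl[p] m) = N := by
    rw [← hleast.1.2, ← hf.map_ordProj_mul_map_ordCompl hp hm, hone, one_mul]
  have hle : m ≤ ordCompl[p] m := hleast.2 ⟨Nat.ordCompl_pos p hm, hmap⟩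
  have hlt : ordCompl[p] m < m := Nat.div_lt_self hleast.1.1
    (Nat.one_lt_pow (hp.factorization_pos_of_dvd hm hpm).ne' hp.one_lt)
  exact hle.not_gt hlt

theorem map_pow_mul_pow_mul (hf : IsCoprimeMultiplicative f) {x y d : ℕ} (hxy : x.Coprime y)
    (hxd : x.Coprime d) (hyd : y.Coprime d) (a b : ℕ) :
    f (x ^ a * (y ^ b * d)) = f (x ^ a) * (f (y ^ b) * f d) := by
  rw [hf.map_mul_of_coprime (.mul_right (hxy.pow a b) (hxd.pow_left a)),
    hf.map_mul_of_coprime (hyd.pow_left b)]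

end MulOneClass

section MulZeroOneClass

variable [MulZeroOneClass R]

theorem map_ordProj_ne_zero (hf : IsCoprimeMultiplicative f) {p : ℕ} (hp : p.Prime) (hm : m ≠ 0)
    (hfm : f m ≠ 0) : f (ordProj[p] m) ≠ 0 := by
  rw [← hf.map_ordProj_mul_map_ordCompl hp hm] at hfm
  exact left_ne_zero_of_mul hfm

theorem not_dvd_of_isLeast (hf : IsCoprimeMultiplicative f) (hN0 : N ≠ 0)
    (hleast : IsLeast {n | 0 < n ∧ f n = N} m) {p : ℕ} (hp : p.Prime)
    (hpow : ∀ ν, 1 ≤ ν → f (p ^ ν) = 0 ∨ f (p ^ ν) = 1) : ¬p ∣ m := by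
  intro hpm
  have hm : m ≠ 0 := hleast.1.1.ne'
  rcases hpow _ (hp.factorization_pos_of_dvd hm hpm) with hzero | hone
  · exact hf.map_ordProj_ne_zero hp hm (hleast.1.2.trans_ne hN0) hzero
  · exact hf.map_ordProj_ne_one_of_isLeast hleast hp hpm hone

end MulZeroOneClass

section CommMonoid

variable [CommMonoid R]

theorem factorization_le_factorization_of_isLeast (hf : IsCoprimeMultiplicative f)
    (hleast : IsLeast {n | 0 < n ∧ f n = N} m) {p p' : ℕ} (hp : p.Prime) (hp' : p'.Prime)
    (hlt : p < p') (hpow : ∀ ν, f (p ^ ν) = f (p' ^ ν)) :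
    m.factorization p' ≤ m.factorization p := by
  by_contra! hexp
  obtain ⟨d, hd, hpd, hpd', hm⟩ :=
    exists_eq_pow_factorization_mul_pow_factorization_mul hp hp' hlt.ne hleast.1.1.ne'
  set a := m.factorization p
  set b := m.factorization p'
  have hmap := hf.map_pow_mul_pow_mul ((Nat.coprime_primes hp hp').2 hlt.ne) hpd hpd'
  have hswap : f (p ^ b * (p' ^ a * d)) = N := by
    rw [← hleast.1.2, hm, hmap, hmap, hpow b, ← hpow a, mul_left_comm]
  have hpos : 0 < p ^ b * (p' ^ a * d) := by
    have := hp.pos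
    have := hp'.pos
    positivity
  refine (hleast.2 ⟨hpos, hswap⟩).not_gt ?_
  calc p ^ b * (p' ^ a * d) = p ^ b * p' ^ a * d := (mul_assoc ..).symm
    _ < p ^ a * p' ^ b * d :=
      Nat.mul_lt_mul_of_pos_right (pow_mul_pow_lt_pow_mul_pow hp.pos hlt hexp) hd
    _ = m := by rw [mul_assoc, ← hm]

theorem antitoneOn_factorization_of_isLeast (hf : IsCoprimeMultiplicative f)
    (hleast : IsLeast {n | 0 < n ∧ f n = N} m) {ι : Type*} [PartialOrder ι] {q : ι → ℕ}
    {s : Set ι} (hprime : ∀ j ∈ s, (q j).Prime) (hmono : StrictMonoOn q s) {g : ℕ → R}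
    (hpow : ∀ j ∈ s, ∀ ν, 1 ≤ ν → f (q j ^ ν) = g ν) :
    AntitoneOn (fun j => m.factorization (q j)) s := by
  intro i hi j hj hij
  rcases hij.eq_or_lt with rfl | hlt
  · rfl
  refine hf.factorization_le_factorization_of_isLeast hleast (hprime i hi) (hprime j hj)
    (hmono hi hj hlt) fun ν => ?_
  rcases Nat.eq_zero_or_pos ν with rfl | hν
  · simp only [pow_zero]
  · rw [hpow i hi ν hν, hpow j hj ν hν]

end CommMonoid

end IsCoprimeMultiplicative

theorem exists_pos_map_eq_of_map_pow_eq {R : Type*} [One R] {f g : ℕ → R} {p : ℕ} (hp : 0 < p)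
    (hg0 : g 0 = 1) (hpow : ∀ ν, 1 ≤ ν → f (p ^ ν) = g ν) {N : R} (hN1 : N ≠ 1)
    (hN : ∃ ν, g ν = N) : ∃ m : ℕ, 0 < m ∧ f m = N := by
  obtain ⟨ν, rfl⟩ := hN
  have hν : 1 ≤ ν := Nat.one_le_iff_ne_zero.2 fun h => hN1 (h ▸ hg0)
  exact ⟨p ^ ν, pow_pos hp ν, hpow ν hν⟩

theorem minimal_preimage_factorisation_general {R : Type*} [CommMonoidWithZero R]
    {q : ℕ → ℕ} {g f : ℕ → R} {N : R} {m : ℕ}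
    (hqprime : ∀ j : ℕ, 1 ≤ j → (q j).Prime) (hqmono : ∀ j : ℕ, 1 ≤ j → q j < q (j + 1))
    (hf : IsCoprimeMultiplicative f)
    (hfQ : ∀ p ν : ℕ, p.Prime → (∃ j, 1 ≤ j ∧ q j = p) → 1 ≤ ν → f (p ^ ν) = g ν)
    (hfnotQ : ∀ p ν : ℕ, p.Prime → ¬(∃ j, 1 ≤ j ∧ q j = p) → 1 ≤ ν →
      f (p ^ ν) = 0 ∨ f (p ^ ν) = 1)
    (hN0 : N ≠ 0) (hN1 : N ≠ 1) (hleast : IsLeast {n | 0 < n ∧ f n = N} m) :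
    ∃ r : ℕ, 1 ≤ r ∧
      m = ∏ j ∈ Finset.Icc 1 r, q j ^ m.factorization (q j) ∧
      (∀ j ∈ Finset.Icc 1 r, 1 ≤ m.factorization (q j)) ∧
      (∀ j : ℕ, 1 ≤ j → j + 1 ≤ r →
        m.factorization (q (j + 1)) ≤ m.factorization (q j)) := by
  have hm : 1 < m := Nat.one_lt_iff_ne_zero_and_ne_one.2
    ⟨hleast.1.1.ne', fun h => hN1 (by rw [← hleast.1.2, h, hf.map_one])⟩
  have hmono : StrictMonoOn q (Set.Ici 1) :=
    strictMonoOn_of_lt_succ Set.ordConnected_Ici fun j _ hj _ => hqmono j hj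
  have hanti := hf.antitoneOn_factorization_of_isLeast hleast hqprime hmono
    fun j hj ν => hfQ (q j) ν (hqprime j hj) ⟨j, hj, rfl⟩
  have hrange : ∀ p, p.Prime → p ∣ m → ∃ j, 1 ≤ j ∧ q j = p := fun p hp hpm =>
    by_contra fun hpQ => hf.not_dvd_of_isLeast hN0 hleast hp (fun ν => hfnotQ p ν hp hpQ) hpm
  obtain ⟨r, hr, hprod, hpos⟩ :=
    exists_eq_prod_Icc_pow_factorization hm hmono.injOn hrange hanti
  exact ⟨r, hr, hprod, hpos, fun j hj _ => hanti hj (Nat.le_add_left 1 j) j.le_succ⟩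

/-- For `N` in the monoid `⟨Q⟩` with `N > 1`, the least positive integer `m_N` with
`f(m_N) = N` exists and factors as `m_N = q₁^{ν₁}···q_r^{ν_r}` with `r ≥ 1` and
exponents `ν₁ ≥ ν₂ ≥ … ≥ ν_r ≥ 1`; in particular the primes dividing `m_N` are exactly
the `r` smallest elements `q₁ < … < q_r` of `Q`. -/
theorem minimal_preimage_factorisation
    (q : ℕ → ℕ) (g f : ℕ → ℕ)
    (hqprime : ∀ j : ℕ, 1 ≤ j → (q j).Prime)
    (hqmono : ∀ j : ℕ, 1 ≤ j → q j < q (j + 1))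
    (hg0 : g 0 = 1) (hgmono : Monotone g)
    (hgrange : ∀ m : ℕ, 0 < m → (∀ p : ℕ, p.Prime → p ∣ m → ∃ j, 1 ≤ j ∧ q j = p) →
      ∃ x : ℕ, g x = m)
    (hf0 : f 0 = 1) (hf1 : f 1 = 1)
    (hfmult : ∀ m₁ m₂ : ℕ, Nat.Coprime m₁ m₂ → f (m₁ * m₂) = f m₁ * f m₂)
    (hfQ : ∀ p ν : ℕ, p.Prime → (∃ j, 1 ≤ j ∧ q j = p) → 1 ≤ ν → f (p ^ ν) = g ν)
    (hfnotQ : ∀ p ν : ℕ, p.Prime → ¬(∃ j, 1 ≤ j ∧ q j = p) → 1 ≤ ν →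
      f (p ^ ν) = 0 ∨ f (p ^ ν) = 1)
    -- `N ∈ ⟨Q⟩` and `N > 1`
    (N : ℕ) (hN1 : 1 < N)
    (hNQ : ∀ p : ℕ, p.Prime → p ∣ N → ∃ j, 1 ≤ j ∧ q j = p)
    -- `m_N` is the least positive integer `m` with `f(m) = N`
    (mN : ℕ) (hmN : mN = sInf {m : ℕ | 0 < m ∧ f m = N}) :
    (∃ m : ℕ, 0 < m ∧ f m = N) ∧
    ∃ r : ℕ, 1 ≤ r ∧
      mN = ∏ j ∈ Finset.Icc 1 r, q j ^ mN.factorization (q j) ∧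
      (∀ j ∈ Finset.Icc 1 r, 1 ≤ mN.factorization (q j)) ∧
      (∀ j : ℕ, 1 ≤ j → j + 1 ≤ r →
        mN.factorization (q (j + 1)) ≤ mN.factorization (q j)) := by
  have hex := exists_pos_map_eq_of_map_pow_eq (hqprime 1 le_rfl).pos hg0
    (fun ν => hfQ (q 1) ν (hqprime 1 le_rfl) ⟨1, le_rfl, rfl⟩) hN1.ne' (hgrange N (by lia) hNQ)
  exact ⟨hex, minimal_preimage_factorisation_general hqprime hqmono ⟨hf1, hfmult _ _⟩ hfQ hfnotQ
    (by lia) hN1.ne' (hmN ▸ isLeast_csInf hex)⟩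
end

section
/- Under the standing hypotheses, for N ∈ ⟨Q⟩ with N > 1, let m_N be the least positive integer m with f(m) = N. If N′ ∈ ⟨Q⟩, N′ > 1, and N′ divides N, then m_{N′} ≤ m_N. -/
/-!
If `f m = N ∈ ⟨Q⟩`, then every divisor of `N` is the value of `f` at some divisor of `m`, so the
least preimage of `N` bounds that of each of its divisors. By multiplicativity it is enough to treat
a prime power `m = p ^ n` with `p ∈ Q`: a divisor `d` of `g n` is a value of `g`, and since
`d ≤ g n` and `g` is monotone, it is attained at some `x ≤ n`, whence `d = f (p ^ x)` with
`p ^ x ∣ p ^ n`.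
-/

/-- The monoid `⟨Q⟩` generated by the primes belonging to `Q`, encoded as the set of nonzero
natural numbers all of whose prime factors lie in `Q`. -/
def factoredOver (Q : Set ℕ) : Set ℕ :=
  {m | m ≠ 0 ∧ ∀ p : ℕ, p.Prime → p ∣ m → p ∈ Q}

theorem mem_factoredOver_of_dvd {Q : Set ℕ} {d m : ℕ} (hm : m ∈ factoredOver Q) (hd : d ∣ m) :
    d ∈ factoredOver Q :=
  ⟨ne_zero_of_dvd_ne_zero hm.1 hd, fun p hp hpd => hm.2 p hp (hpd.trans hd)⟩

/-- Every divisor of `f m` is the value of `f` at a divisor of `m`. This is the local property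
which allows a preimage of `N` to be shrunk to a preimage of a given divisor of `N`. -/
def LiftsDivisors {α β : Type*} [Monoid α] [Monoid β] (f : α → β) (m : α) : Prop :=
  ∀ d, d ∣ f m → ∃ m', m' ∣ m ∧ f m' = d

namespace LiftsDivisors

theorem of_apply_eq_one {α β : Type*} [Monoid α] [CommMonoid β] [Subsingleton βˣ]
    {f : α → β} {m : α} (hf1 : f 1 = 1) (hm : f m = 1) : LiftsDivisors f m := by
  intro d hd
  rw [hm, ← isUnit_iff_dvd_one, isUnit_iff_eq_one] at hd
  exact ⟨1, one_dvd m, hf1.trans hd.symm⟩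

theorem mul_of_coprime {β : Type*} [CommMonoid β] [DecompositionMonoid β] {f : ℕ → β} {a b : ℕ}
    (hfmult : ∀ m₁ m₂ : ℕ, m₁.Coprime m₂ → f (m₁ * m₂) = f m₁ * f m₂) (hab : a.Coprime b)
    (ha : LiftsDivisors f a) (hb : LiftsDivisors f b) : LiftsDivisors f (a * b) := by
  intro d hd
  rw [hfmult a b hab] at hd
  obtain ⟨d₁, d₂, hd₁, hd₂, rfl⟩ := exists_dvd_and_dvd_of_dvd_mul hd
  obtain ⟨a', ha', rfl⟩ := ha d₁ hd₁
  obtain ⟨b', hb', rfl⟩ := hb d₂ hd₂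
  exact ⟨a' * b', mul_dvd_mul ha' hb', hfmult a' b' (hab.of_dvd ha' hb')⟩

theorem pow_of_monotone {α : Type*} [Monoid α] {f : α → ℕ} {g : ℕ → ℕ} {p : α} {n : ℕ}
    (hg : Monotone g) (hfg : ∀ ν, f (p ^ ν) = g ν) (hn : g n ≠ 0)
    (hrange : ∀ d, d ∣ g n → d ∈ Set.range g) : LiftsDivisors f (p ^ n) := by
  intro d hd
  rw [hfg] at hd
  obtain ⟨x, rfl⟩ := hrange d hd
  have hle : g x ≤ g n := Nat.le_of_dvd (Nat.pos_of_ne_zero hn) hd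
  refine ⟨p ^ min x n, pow_dvd_pow p (min_le_right x n), ?_⟩
  rw [hfg, hg.map_min, min_eq_left hle]

theorem of_apply_mem_factoredOver {Q : Set ℕ} {f g : ℕ → ℕ} (hg : Monotone g)
    (hgrange : factoredOver Q ⊆ Set.range g) (hf1 : f 1 = 1)
    (hfmult : ∀ m₁ m₂ : ℕ, m₁.Coprime m₂ → f (m₁ * m₂) = f m₁ * f m₂)
    (hfQ : ∀ p ν : ℕ, p.Prime → p ∈ Q → f (p ^ ν) = g ν)
    (hfnotQ : ∀ p ν : ℕ, p.Prime → p ∉ Q → 1 ≤ ν → f (p ^ ν) = 0 ∨ f (p ^ ν) = 1)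
    {m : ℕ} (hm : m ≠ 0) (hfm : f m ∈ factoredOver Q) : LiftsDivisors f m := by
  induction m using Nat.recOnPosPrimePosCoprime with
  | zero => exact absurd rfl hm
  | one => exact of_apply_eq_one hf1 hf1
  | prime_pow p n hp hn =>
    by_cases hpQ : p ∈ Q
    · rw [hfQ p n hp hpQ] at hfm
      exact pow_of_monotone hg (fun ν => hfQ p ν hp hpQ) hfm.1
        fun d hd => hgrange (mem_factoredOver_of_dvd hfm hd)
    · exact of_apply_eq_one hf1 ((hfnotQ p n hp hpQ hn).resolve_left hfm.1)
  | coprime a b ha hb hab iha ihb =>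
    rw [hfmult a b hab] at hfm
    exact mul_of_coprime hfmult hab
      (iha (by lia) (mem_factoredOver_of_dvd hfm (dvd_mul_right _ _)))
      (ihb (by lia) (mem_factoredOver_of_dvd hfm (dvd_mul_left _ _)))

end LiftsDivisors

theorem exists_pos_apply_eq_of_mem_factoredOver {Q : Set ℕ} {f g : ℕ → ℕ}
    (hgrange : factoredOver Q ⊆ Set.range g) (hf1 : f 1 = 1)
    (hfQ : ∀ p ν : ℕ, p.Prime → p ∈ Q → f (p ^ ν) = g ν) {N : ℕ} (hN : N ∈ factoredOver Q) :
    ∃ m : ℕ, 0 < m ∧ f m = N := by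
  obtain rfl | hN1 := eq_or_ne N 1
  · exact ⟨1, one_pos, hf1⟩
  · obtain ⟨p, hp, hpN⟩ := Nat.exists_prime_and_dvd hN1
    obtain ⟨x, rfl⟩ := hgrange hN
    exact ⟨p ^ x, pow_pos hp.pos x, hfQ p x hp (hN.2 p hp hpN)⟩

theorem sInf_pos_preimage_le_of_dvd {β : Type*} [Monoid β] {f : ℕ → β} {a b : β} (hba : b ∣ a)
    (hex : ∃ m : ℕ, 0 < m ∧ f m = a) (hlift : ∀ m : ℕ, 0 < m → f m = a → LiftsDivisors f m) :
    sInf {m : ℕ | 0 < m ∧ f m = b} ≤ sInf {m : ℕ | 0 < m ∧ f m = a} := by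
  obtain ⟨hpos, hfa⟩ := Nat.sInf_mem hex
  obtain ⟨m', hdvd, hfb⟩ := hlift _ hpos hfa b (hfa.symm ▸ hba)
  have hmem : m' ∈ {m : ℕ | 0 < m ∧ f m = b} := ⟨Nat.pos_of_dvd_of_pos hdvd hpos, hfb⟩
  exact (Nat.sInf_le hmem).trans (Nat.le_of_dvd hpos hdvd)

theorem minimal_preimage_monotone_in_divisors_general {Q : Set ℕ} {f g : ℕ → ℕ}
    (hg0 : g 0 = 1) (hgmono : Monotone g) (hgrange : factoredOver Q ⊆ Set.range g)
    (hf1 : f 1 = 1) (hfmult : ∀ m₁ m₂ : ℕ, m₁.Coprime m₂ → f (m₁ * m₂) = f m₁ * f m₂)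
    (hfQ : ∀ p ν : ℕ, p.Prime → p ∈ Q → 1 ≤ ν → f (p ^ ν) = g ν)
    (hfnotQ : ∀ p ν : ℕ, p.Prime → p ∉ Q → 1 ≤ ν → f (p ^ ν) = 0 ∨ f (p ^ ν) = 1)
    {N N' : ℕ} (hN : N ∈ factoredOver Q) (hdvd : N' ∣ N) :
    (∃ m : ℕ, 0 < m ∧ f m = N) ∧ (∃ m : ℕ, 0 < m ∧ f m = N') ∧
    sInf {m : ℕ | 0 < m ∧ f m = N'} ≤ sInf {m : ℕ | 0 < m ∧ f m = N} := by
  have hfpow : ∀ p ν : ℕ, p.Prime → p ∈ Q → f (p ^ ν) = g ν := by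
    intro p ν hp hpQ
    obtain rfl | hν := ν.eq_zero_or_pos
    · rw [pow_zero, hf1, hg0]
    · exact hfQ p ν hp hpQ hν
  have hex : ∀ M ∈ factoredOver Q, ∃ m : ℕ, 0 < m ∧ f m = M := fun _ hM =>
    exists_pos_apply_eq_of_mem_factoredOver hgrange hf1 hfpow hM
  refine ⟨hex N hN, hex N' (mem_factoredOver_of_dvd hN hdvd), ?_⟩
  refine sInf_pos_preimage_le_of_dvd hdvd (hex N hN) fun m hm hfm => ?_
  exact .of_apply_mem_factoredOver hgmono hgrange hf1 hfmult hfpow hfnotQ hm.ne' (hfm.symm ▸ hN)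

/-- For `N, N′ ∈ ⟨Q⟩` with `N, N′ > 1` and `N′ ∣ N`, the least positive integers `m_N`,
`m_{N′}` with `f(m_N) = N`, `f(m_{N′}) = N′` exist and satisfy `m_{N′} ≤ m_N`. -/
theorem minimal_preimage_monotone_in_divisors
    (q : ℕ → ℕ) (g f : ℕ → ℕ)
    (hqprime : ∀ j : ℕ, 1 ≤ j → (q j).Prime)
    (hqmono : ∀ j : ℕ, 1 ≤ j → q j < q (j + 1))
    (hg0 : g 0 = 1) (hgmono : Monotone g)
    (hgrange : ∀ m : ℕ, 0 < m → (∀ p : ℕ, p.Prime → p ∣ m → ∃ j, 1 ≤ j ∧ q j = p) →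
      ∃ x : ℕ, g x = m)
    (hf0 : f 0 = 1) (hf1 : f 1 = 1)
    (hfmult : ∀ m₁ m₂ : ℕ, Nat.Coprime m₁ m₂ → f (m₁ * m₂) = f m₁ * f m₂)
    (hfQ : ∀ p ν : ℕ, p.Prime → (∃ j, 1 ≤ j ∧ q j = p) → 1 ≤ ν → f (p ^ ν) = g ν)
    (hfnotQ : ∀ p ν : ℕ, p.Prime → ¬(∃ j, 1 ≤ j ∧ q j = p) → 1 ≤ ν →
      f (p ^ ν) = 0 ∨ f (p ^ ν) = 1)
    -- `N, N′ ∈ ⟨Q⟩`, `N, N′ > 1`, and `N′ ∣ N`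
    (N N' : ℕ) (hN1 : 1 < N) (hN'1 : 1 < N')
    (hNQ : ∀ p : ℕ, p.Prime → p ∣ N → ∃ j, 1 ≤ j ∧ q j = p)
    (hN'Q : ∀ p : ℕ, p.Prime → p ∣ N' → ∃ j, 1 ≤ j ∧ q j = p)
    (hdvd : N' ∣ N) :
    (∃ m : ℕ, 0 < m ∧ f m = N) ∧ (∃ m : ℕ, 0 < m ∧ f m = N') ∧
    sInf {m : ℕ | 0 < m ∧ f m = N'} ≤ sInf {m : ℕ | 0 < m ∧ f m = N} := by
  exact minimal_preimage_monotone_in_divisors_general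
    (Q := {p | ∃ j, 1 ≤ j ∧ q j = p}) hg0 hgmono
    (fun m hm => hgrange m (Nat.pos_of_ne_zero hm.1) hm.2) hf1 hfmult hfQ hfnotQ
    ⟨by lia, hNQ⟩ hdvd
end

section
/- Let g : ℕ₀ → ℕ be monotonically increasing with g(0) = 1 and suppose the series ∑_{j=1}^∞ (log(g(j)/g(j−1)))² converges; set C_g = (8·∑_{j=1}^∞ (log(g(j)/g(j−1)))²)^{1/2}. Then for any positive integers ν₁, …, ν_t, ∑_{j ≤ t} log g(ν_j) ≤ (C_g/2)·(∑_{j ≤ t} j·ν_j)^{1/2}. -/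
/-!
Writing `a i = log (g (i + 1) / g i)`, each `log (g (ν j))` telescopes to `∑ i < ν j, a i`.
Exchanging the order of summation gives `∑ i, a i * n i`, where `n i` is the number of `j` with
`i < ν j`, so by Cauchy–Schwarz it suffices to bound `∑ i, n i ^ 2`. Since `n i` distinct positive
integers have sum at least `n i * (n i + 1) / 2`, we have `n i ^ 2 ≤ 2 * ∑ j with i < ν j, j`, and
summing over `i` turns the right-hand side into `2 * ∑ j, j * ν j`.
-/

open scoped Finset

section LevelSets

variable {ι M : Type*} [AddCommMonoid M] (s : Finset ι) (ν : ι → ℕ)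

lemma sum_sum_range_eq_sum_range_sup_sum_filter (f : ι → ℕ → M) :
    ∑ j ∈ s, ∑ i ∈ Finset.range (ν j), f j i =
      ∑ i ∈ Finset.range (s.sup ν), ∑ j ∈ s with i < ν j, f j i := by
  refine Finset.sum_comm' fun j i ↦ ?_
  simp only [Finset.mem_range, Finset.mem_filter]
  exact ⟨fun ⟨hj, hi⟩ ↦ ⟨⟨hj, hi⟩, hi.trans_le (Finset.le_sup hj)⟩, fun ⟨hji, _⟩ ↦ hji⟩

lemma sum_sum_range_eq_sum_card_nsmul (a : ℕ → M) :
    ∑ j ∈ s, ∑ i ∈ Finset.range (ν j), a i =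
      ∑ i ∈ Finset.range (s.sup ν), #{j ∈ s | i < ν j} • a i := by
  simp only [sum_sum_range_eq_sum_range_sup_sum_filter, Finset.sum_const]

lemma sum_nsmul_eq_sum_range_sup_sum_filter (w : ι → M) :
    ∑ j ∈ s, ν j • w j = ∑ i ∈ Finset.range (s.sup ν), ∑ j ∈ s with i < ν j, w j := by
  simp only [← sum_sum_range_eq_sum_range_sup_sum_filter, Finset.sum_const, Finset.card_range]

end LevelSets

lemma card_mul_card_add_one_le_two_mul_sum (s : Finset ℕ) (hs : 0 ∉ s) :
    #s * (#s + 1) ≤ 2 * ∑ j ∈ s, j := by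
  induction s using Finset.induction_on_max with
  | empty => simp
  | insert a s lt_a ih =>
    have ha : a ∉ s := fun h ↦ (lt_a a h).false
    have hs' : 0 ∉ s := fun h ↦ hs (Finset.mem_insert_of_mem h)
    have card_insert_le : #(insert a s) ≤ a := by
      have subset_Icc : insert a s ⊆ Finset.Icc 1 a := fun j hj ↦ by
        have j_ne_zero : j ≠ 0 := ne_of_mem_of_not_mem hj hs
        have j_le : j ≤ a := (Finset.mem_insert.1 hj).elim le_of_eq fun h ↦ (lt_a j h).le
        exact Finset.mem_Icc.2 ⟨Nat.one_le_iff_ne_zero.2 j_ne_zero, j_le⟩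
      simpa using Finset.card_le_card subset_Icc
    rw [Finset.card_insert_of_notMem ha] at card_insert_le ⊢
    rw [Finset.sum_insert ha]
    linarith [ih hs']

lemma sum_card_sq_le_two_mul_sum_mul (s : Finset ℕ) (hs : 0 ∉ s) (ν : ℕ → ℕ) :
    ∑ i ∈ Finset.range (s.sup ν), #{j ∈ s | i < ν j} ^ 2 ≤ 2 * ∑ j ∈ s, j * ν j := by
  calc ∑ i ∈ Finset.range (s.sup ν), #{j ∈ s | i < ν j} ^ 2
      ≤ ∑ i ∈ Finset.range (s.sup ν), 2 * ∑ j ∈ s with i < ν j, j := by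
        refine Finset.sum_le_sum fun i _ ↦ ?_
        have := card_mul_card_add_one_le_two_mul_sum {j ∈ s | i < ν j}
          fun h ↦ hs (Finset.mem_of_mem_filter 0 h)
        linarith
    _ = 2 * ∑ j ∈ s, j * ν j := by
        rw [← Finset.mul_sum, ← sum_nsmul_eq_sum_range_sup_sum_filter]
        simp only [smul_eq_mul, mul_comm]

lemma sum_sum_range_le_sqrt_mul_sqrt {a : ℕ → ℝ} (ha : Summable fun i ↦ a i ^ 2)
    (s : Finset ℕ) (hs : 0 ∉ s) (ν : ℕ → ℕ) :
    ∑ j ∈ s, ∑ i ∈ Finset.range (ν j), a i ≤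
      √(2 * ∑' i, a i ^ 2) * √(∑ j ∈ s, (j : ℝ) * ν j) := by
  have sum_card_sq_le : ∑ i ∈ Finset.range (s.sup ν), (#{j ∈ s | i < ν j} : ℝ) ^ 2 ≤
      2 * ∑ j ∈ s, (j : ℝ) * ν j := by
    exact_mod_cast sum_card_sq_le_two_mul_sum_mul s hs ν
  have sum_sq_le : ∑ i ∈ Finset.range (s.sup ν), a i ^ 2 ≤ ∑' i, a i ^ 2 :=
    ha.sum_le_tsum _ fun i _ ↦ sq_nonneg (a i)
  calc ∑ j ∈ s, ∑ i ∈ Finset.range (ν j), a i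
      = ∑ i ∈ Finset.range (s.sup ν), (#{j ∈ s | i < ν j} : ℝ) * a i := by
        simp only [sum_sum_range_eq_sum_card_nsmul, nsmul_eq_mul]
    _ ≤ √(∑ i ∈ Finset.range (s.sup ν), (#{j ∈ s | i < ν j} : ℝ) ^ 2) *
          √(∑ i ∈ Finset.range (s.sup ν), a i ^ 2) := Real.sum_mul_le_sqrt_mul_sqrt _ _ _
    _ ≤ √(2 * ∑ j ∈ s, (j : ℝ) * ν j) * √(∑' i, a i ^ 2) := by gcongr
    _ = √(2 * ∑' i, a i ^ 2) * √(∑ j ∈ s, (j : ℝ) * ν j) := by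
        rw [Real.sqrt_mul zero_le_two, Real.sqrt_mul zero_le_two, mul_right_comm]

lemma sum_range_log_div {g : ℕ → ℝ} (hg : ∀ n, g n ≠ 0) (n : ℕ) :
    ∑ i ∈ Finset.range n, Real.log (g (i + 1) / g i) = Real.log (g n) - Real.log (g 0) := by
  simp only [Real.log_div (hg _) (hg _), Finset.sum_range_sub fun i ↦ Real.log (g i)]

theorem sum_log_g_le_CauchySchwarz_general
    (g : ℕ → ℝ) (hg0 : g 0 = 1) (hgpos : ∀ n, 0 < g n)
    (hsum : Summable fun j : ℕ => (Real.log (g (j + 1) / g j)) ^ 2)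
    (s : Finset ℕ) (hs : 0 ∉ s) (ν : ℕ → ℕ) :
    ∑ j ∈ s, Real.log (g (ν j)) ≤
      √(8 * ∑' j : ℕ, (Real.log (g (j + 1) / g j)) ^ 2) / 2 * √(∑ j ∈ s, (j : ℝ) * ν j) := by
  have log_eq_sum (n : ℕ) :
      Real.log (g n) = ∑ i ∈ Finset.range n, Real.log (g (i + 1) / g i) := by
    rw [sum_range_log_div fun n ↦ (hgpos n).ne', hg0, Real.log_one, sub_zero]
  have sqrt_eight_mul_div_two (x : ℝ) : √(8 * x) / 2 = √(2 * x) := by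
    rw [show 8 * x = 2 ^ 2 * (2 * x) by ring, Real.sqrt_mul (sq_nonneg 2),
      Real.sqrt_sq zero_le_two, mul_div_cancel_left₀ _ two_ne_zero]
  simp only [log_eq_sum (ν _), sqrt_eight_mul_div_two]
  exact sum_sum_range_le_sqrt_mul_sqrt hsum s hs ν

/-- If `g : ℕ₀ → ℕ` is monotonically increasing with `g(0) = 1` and
`∑_{j≥1} (log(g(j)/g(j−1)))²` converges, then for any positive integers `ν₁, …, ν_t`,
`∑_{j ≤ t} log g(ν_j) ≤ (C_g/2)·(∑_{j ≤ t} j·ν_j)^{1/2}`, where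
`C_g = (8·∑_{j≥1} (log(g(j)/g(j−1)))²)^{1/2}`. -/
theorem sum_log_g_le_CauchySchwarz
    (g : ℕ → ℕ) (hg0 : g 0 = 1) (hgmono : Monotone g)
    (hsum : Summable fun j : ℕ => (Real.log ((g (j + 1) : ℝ) / (g j : ℝ))) ^ 2)
    (t : ℕ) (ν : ℕ → ℕ) (hν : ∀ j : ℕ, 1 ≤ j → j ≤ t → 1 ≤ ν j) :
    ∑ j ∈ Finset.Icc 1 t, Real.log (g (ν j)) ≤
      Real.sqrt (8 * ∑' j : ℕ, (Real.log ((g (j + 1) : ℝ) / (g j : ℝ))) ^ 2) / 2 *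
        Real.sqrt (∑ j ∈ Finset.Icc 1 t, (j : ℝ) * ν j) := by
  have hgpos (n : ℕ) : (0 : ℝ) < g n := by
    exact_mod_cast Nat.one_pos.trans_le (hg0 ▸ hgmono n.zero_le)
  exact sum_log_g_le_CauchySchwarz_general (fun n ↦ g n) (by simp [hg0]) hgpos hsum _ (by simp) ν
end

section
/- Let g : ℕ₀ → ℕ be monotonically increasing with g(0) = 1 and suppose g(i)/g(i−1) = 1 + O(i^{−1/2−ε}) for some ε > 0. Then there is a constant C (depending only on g and ε) such that for all positive integers ν and all positive integers ν₁ ≥ ν₂ ≥ … ≥ ν_t with ν_t ≥ ν, one has ∑_{j ≤ t} log g(ν_j) ≤ C·( ν^{−2ε} + (log g(ν))²/ν )^{1/2} · (∑_{j ≤ t} j·ν_j)^{1/2}. -/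
/-!
Put `f = log ∘ g` and `S = ∑ j, j * a j`. Bounding `f (a j)` by `f ν` plus the increments of `f` on
`(ν, a j]` and exchanging the order of summation gives
`∑ j, f (a j) ≤ t * f ν + ∑ i > ν, #{j | i ≤ a j} * w i`, where `w i = O(i ^ (-1/2 - ε))` bounds the
increments. A set of `m` positive integers has sum at least `m ^ 2 / 2`; hence `t ^ 2 * ν ≤ 2 * S`
and, level by level, `∑ i, #{j | i ≤ a j} ^ 2 ≤ 2 * S`. The first bound controls `t * f ν`, and the
second controls the remaining sum by Cauchy-Schwarz, since `∑ i > ν, w i ^ 2 = O(ν ^ (-2 * ε))`.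
-/

open Finset

theorem sq_card_le_two_mul_sum {s : Finset ℕ} (hs : 0 ∉ s) : #s ^ 2 ≤ 2 * ∑ j ∈ s, j := by
  induction s using Finset.induction_on_max with
  | empty => simp
  | insert m s hlt ih =>
    obtain ⟨hm, hs⟩ : 0 ≠ m ∧ 0 ∉ s := by simpa only [mem_insert, not_or] using hs
    have hms : m ∉ s := fun h => (hlt m h).false
    have hcard : #s + 1 ≤ m := by
      have hsub : s ⊆ Ioo 0 m := fun j hj =>
        mem_Ioo.2 ⟨Nat.pos_of_ne_zero (ne_of_mem_of_not_mem hj hs), hlt j hj⟩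
      have := card_le_card hsub
      rw [Nat.card_Ioo] at this
      omega
    rw [card_insert_of_notMem hms, sum_insert hms]
    nlinarith [ih hs]

theorem le_add_sum_Ioc_of_sub_le {M : Type*} [AddCommGroup M] [PartialOrder M]
    [IsOrderedAddMonoid M] {f w : ℕ → M} (hfw : ∀ n, f (n + 1) - f n ≤ w (n + 1))
    {m n : ℕ} (hmn : m ≤ n) : f n ≤ f m + ∑ i ∈ Ioc m n, w i := by
  induction n, hmn using Nat.le_induction with
  | base => simp
  | succ n hmn ih =>
    rw [sum_Ioc_succ_top (by omega), ← add_assoc]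
    exact (sub_le_iff_le_add'.1 (hfw n)).trans (by gcongr)

theorem sum_Ioc_rpow_neg_one_sub_le {p : ℝ} (hp : 0 < p) {m : ℕ} (hm : 1 ≤ m) (n : ℕ) :
    ∑ i ∈ Ioc m n, (i : ℝ) ^ (-1 - p) ≤ (m : ℝ) ^ (-p) / p := by
  obtain hmn | hnm := le_total m n
  · have hm' : (0 : ℝ) < m := by exact_mod_cast hm
    have hmn' : (m : ℝ) ≤ n := by exact_mod_cast hmn
    have hanti : AntitoneOn (fun x : ℝ => x ^ (-1 - p)) (Set.Icc m n) := fun x hx y _ hxy =>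
      Real.rpow_le_rpow_of_nonpos (hm'.trans_le hx.1) hxy (by linarith)
    have h0 : (0 : ℝ) ∉ Set.uIcc (m : ℝ) n := by
      rw [Set.uIcc_of_le hmn']
      exact fun h => hm'.not_ge h.1
    calc ∑ i ∈ Ioc m n, (i : ℝ) ^ (-1 - p)
        = ∑ i ∈ Ico m n, ((i + 1 : ℕ) : ℝ) ^ (-1 - p) := by
          rw [sum_Ico_add' (fun i : ℕ => (i : ℝ) ^ (-1 - p)) m n 1, Ico_add_one_add_one_eq_Ioc]
      _ ≤ ∫ x in (m : ℝ)..n, x ^ (-1 - p) := hanti.sum_le_integral_Ico hmn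
      _ = ((m : ℝ) ^ (-p) - (n : ℝ) ^ (-p)) / p := by
          rw [integral_rpow (.inr ⟨by linarith, h0⟩), show -1 - p + 1 = -p by ring, div_neg,
            ← neg_div, neg_sub]
      _ ≤ (m : ℝ) ^ (-p) / p := by
          gcongr
          exact sub_le_self _ (by positivity)
  · rw [Ioc_eq_empty_of_le hnm, sum_empty]
    positivity

theorem sum_Ioc_sq_mul_rpow_le (B : ℝ) {ε : ℝ} (hε : 0 < ε) {m : ℕ} (hm : 1 ≤ m) (n : ℕ) :
    ∑ i ∈ Ioc m n, (B * (i : ℝ) ^ (-(1 / 2 : ℝ) - ε)) ^ 2 ≤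
      B ^ 2 / (2 * ε) * (m : ℝ) ^ (-(2 * ε)) :=
  calc ∑ i ∈ Ioc m n, (B * (i : ℝ) ^ (-(1 / 2 : ℝ) - ε)) ^ 2
      = B ^ 2 * ∑ i ∈ Ioc m n, (i : ℝ) ^ (-1 - 2 * ε) := by
        rw [mul_sum]
        refine sum_congr rfl fun i _ => ?_
        rw [mul_pow, ← Real.rpow_mul_natCast i.cast_nonneg]
        ring_nf
    _ ≤ B ^ 2 * ((m : ℝ) ^ (-(2 * ε)) / (2 * ε)) := by
        gcongr
        exact sum_Ioc_rpow_neg_one_sub_le (by positivity) hm n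
    _ = B ^ 2 / (2 * ε) * (m : ℝ) ^ (-(2 * ε)) := by ring

theorem sum_sum_Ioc_eq_sum_superlevel {ι M : Type*} [AddCommMonoid M] (s : Finset ι) (a : ι → ℕ)
    (ν : ℕ) (F : ι → ℕ → M) :
    ∑ j ∈ s, ∑ i ∈ Ioc ν (a j), F j i =
      ∑ i ∈ Ioc ν (s.sup a), ∑ j ∈ s with i ≤ a j, F j i := by
  refine sum_comm' fun j i => ?_
  simp only [mem_Ioc, mem_filter]
  have hle : j ∈ s → a j ≤ s.sup a := le_sup
  grind

section WeightedSum

variable {s : Finset ℕ} {a : ℕ → ℕ} {ν : ℕ}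

theorem sq_card_mul_le_two_mul_sum_mul (hs : 0 ∉ s) (ha : ∀ j ∈ s, ν ≤ a j) :
    #s ^ 2 * ν ≤ 2 * ∑ j ∈ s, j * a j :=
  calc #s ^ 2 * ν ≤ (2 * ∑ j ∈ s, j) * ν := by
        gcongr
        exact sq_card_le_two_mul_sum hs
    _ = 2 * ∑ j ∈ s, j * ν := by rw [mul_assoc, sum_mul]
    _ ≤ 2 * ∑ j ∈ s, j * a j := by
        gcongr with j hj
        exact ha j hj

theorem sum_sq_card_superlevel_le (hs : 0 ∉ s) (a : ℕ → ℕ) (ν : ℕ) :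
    ∑ i ∈ Ioc ν (s.sup a), #{j ∈ s | i ≤ a j} ^ 2 ≤ 2 * ∑ j ∈ s, j * a j :=
  calc ∑ i ∈ Ioc ν (s.sup a), #{j ∈ s | i ≤ a j} ^ 2
      ≤ ∑ i ∈ Ioc ν (s.sup a), 2 * ∑ j ∈ s with i ≤ a j, j := by
        gcongr with i _
        exact sq_card_le_two_mul_sum fun h => hs (mem_of_mem_filter 0 h)
    _ = 2 * ∑ j ∈ s, ∑ _i ∈ Ioc ν (a j), j := by
        rw [sum_sum_Ioc_eq_sum_superlevel, mul_sum]
    _ ≤ 2 * ∑ j ∈ s, j * a j := by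
        gcongr with j _
        rw [sum_const, Nat.card_Ioc, smul_eq_mul, mul_comm]
        gcongr
        exact Nat.sub_le _ _

theorem card_mul_le_sqrt_mul_sqrt (hs : 0 ∉ s) (hν : 1 ≤ ν) (ha : ∀ j ∈ s, ν ≤ a j) (y : ℝ) :
    #s * y ≤ √(2 * ∑ j ∈ s, (j : ℝ) * a j) * √(y ^ 2 / ν) := by
  have hν' : (ν : ℝ) ≠ 0 := by exact_mod_cast Nat.ne_of_gt hν
  have hcard : (#s : ℝ) ^ 2 * ν ≤ 2 * ∑ j ∈ s, (j : ℝ) * a j := by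
    exact_mod_cast sq_card_mul_le_two_mul_sum_mul hs ha
  rw [← Real.sqrt_mul (by positivity)]
  refine Real.le_sqrt_of_sq_le ?_
  calc (#s * y) ^ 2 = (#s : ℝ) ^ 2 * ν * (y ^ 2 / ν) := by
        rw [mul_assoc, mul_div_cancel₀ _ hν', mul_pow]
    _ ≤ (2 * ∑ j ∈ s, (j : ℝ) * a j) * (y ^ 2 / ν) := by gcongr

theorem sum_sum_Ioc_le_sqrt_mul_sqrt (hs : 0 ∉ s) (a : ℕ → ℕ) (ν : ℕ) (w : ℕ → ℝ) :
    ∑ j ∈ s, ∑ i ∈ Ioc ν (a j), w i ≤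
      √(2 * ∑ j ∈ s, (j : ℝ) * a j) * √(∑ i ∈ Ioc ν (s.sup a), w i ^ 2) := by
  have hcard : ∑ i ∈ Ioc ν (s.sup a), (#{j ∈ s | i ≤ a j} : ℝ) ^ 2 ≤
      2 * ∑ j ∈ s, (j : ℝ) * a j := by
    exact_mod_cast sum_sq_card_superlevel_le hs a ν
  calc ∑ j ∈ s, ∑ i ∈ Ioc ν (a j), w i
      = ∑ i ∈ Ioc ν (s.sup a), #{j ∈ s | i ≤ a j} * w i := by
        simp only [sum_sum_Ioc_eq_sum_superlevel, sum_const, nsmul_eq_mul]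
    _ ≤ √(∑ i ∈ Ioc ν (s.sup a), (#{j ∈ s | i ≤ a j} : ℝ) ^ 2) *
          √(∑ i ∈ Ioc ν (s.sup a), w i ^ 2) := Real.sum_mul_le_sqrt_mul_sqrt _ _ _
    _ ≤ √(2 * ∑ j ∈ s, (j : ℝ) * a j) * √(∑ i ∈ Ioc ν (s.sup a), w i ^ 2) := by gcongr

theorem sum_comp_le_of_sub_le {f w : ℕ → ℝ} (hfw : ∀ n, f (n + 1) - f n ≤ w (n + 1))
    (hs : 0 ∉ s) (hν : 1 ≤ ν) (ha : ∀ j ∈ s, ν ≤ a j) :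
    ∑ j ∈ s, f (a j) ≤ √(2 * ∑ j ∈ s, (j : ℝ) * a j) *
      (√(f ν ^ 2 / ν) + √(∑ i ∈ Ioc ν (s.sup a), w i ^ 2)) :=
  calc ∑ j ∈ s, f (a j) ≤ ∑ j ∈ s, (f ν + ∑ i ∈ Ioc ν (a j), w i) :=
        sum_le_sum fun j hj => le_add_sum_Ioc_of_sub_le hfw (ha j hj)
    _ = #s * f ν + ∑ j ∈ s, ∑ i ∈ Ioc ν (a j), w i := by
        rw [sum_add_distrib, sum_const, nsmul_eq_mul]
    _ ≤ _ := by
        rw [mul_add]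
        exact add_le_add (card_mul_le_sqrt_mul_sqrt hs hν ha (f ν))
          (sum_sum_Ioc_le_sqrt_mul_sqrt hs a ν w)

theorem sum_comp_le_of_sub_le_rpow {f : ℕ → ℝ} {B ε : ℝ} (hε : 0 < ε)
    (hf : ∀ n : ℕ, f (n + 1) - f n ≤ B * ((n + 1 : ℕ) : ℝ) ^ (-(1 / 2 : ℝ) - ε))
    (hs : 0 ∉ s) (hν : 1 ≤ ν) (ha : ∀ j ∈ s, ν ≤ a j) :
    ∑ j ∈ s, f (a j) ≤ √2 * (1 + √(B ^ 2 / (2 * ε))) *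
      √((ν : ℝ) ^ (-(2 * ε)) + f ν ^ 2 / ν) * √(∑ j ∈ s, (j : ℝ) * a j) := by
  set X : ℝ := (ν : ℝ) ^ (-(2 * ε)) + f ν ^ 2 / ν
  have hhead : f ν ^ 2 / ν ≤ X := le_add_of_nonneg_left (by positivity)
  have htail : ∑ i ∈ Ioc ν (s.sup a), (B * (i : ℝ) ^ (-(1 / 2 : ℝ) - ε)) ^ 2 ≤
      B ^ 2 / (2 * ε) * X := by
    refine (sum_Ioc_sq_mul_rpow_le B hε hν _).trans ?_
    gcongr
    exact le_add_of_nonneg_right (by positivity)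
  calc ∑ j ∈ s, f (a j)
      ≤ √(2 * ∑ j ∈ s, (j : ℝ) * a j) * (√(f ν ^ 2 / ν) +
          √(∑ i ∈ Ioc ν (s.sup a), (B * (i : ℝ) ^ (-(1 / 2 : ℝ) - ε)) ^ 2)) :=
        sum_comp_le_of_sub_le hf hs hν ha
    _ ≤ √(2 * ∑ j ∈ s, (j : ℝ) * a j) * (√X + √(B ^ 2 / (2 * ε) * X)) := by gcongr
    _ = √2 * (1 + √(B ^ 2 / (2 * ε))) * √X * √(∑ j ∈ s, (j : ℝ) * a j) := by
        rw [Real.sqrt_mul (by positivity), Real.sqrt_mul (by positivity)]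
        ring

end WeightedSum

theorem sum_log_g_le_of_large_min_exponent_general {g : ℕ → ℝ} (hg : ∀ n, 0 < g n) {ε : ℝ}
    (hε : 0 < ε) (hgratio : ∃ B : ℝ, ∀ i : ℕ, 1 ≤ i →
      g i / g (i - 1) - 1 ≤ B * (i : ℝ) ^ (-(1 / 2 : ℝ) - ε)) :
    ∃ C : ℝ, 0 < C ∧ ∀ ν : ℕ, 1 ≤ ν → ∀ (s : Finset ℕ) (a : ℕ → ℕ), 0 ∉ s →
      (∀ j ∈ s, ν ≤ a j) →
      ∑ j ∈ s, Real.log (g (a j)) ≤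
        C * √((ν : ℝ) ^ (-(2 * ε)) + Real.log (g ν) ^ 2 / ν) * √(∑ j ∈ s, (j : ℝ) * a j) := by
  obtain ⟨B, hB⟩ := hgratio
  have hlog (n : ℕ) : Real.log (g (n + 1)) - Real.log (g n) ≤
      B * ((n + 1 : ℕ) : ℝ) ^ (-(1 / 2 : ℝ) - ε) := by
    rw [← Real.log_div (hg _).ne' (hg _).ne']
    exact (Real.log_le_sub_one_of_pos (div_pos (hg _) (hg _))).trans (hB (n + 1) (by omega))
  exact ⟨√2 * (1 + √(B ^ 2 / (2 * ε))), by positivity, fun ν hν s a hs ha =>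
    sum_comp_le_of_sub_le_rpow (f := fun n => Real.log (g n)) hε hlog hs hν ha⟩

/-- If `g : ℕ₀ → ℕ` is monotonically increasing with `g(0) = 1` and
`g(i)/g(i−1) = 1 + O(i^{−1/2−ε})` for some `ε > 0`, then there is a constant `C`
such that for all `ν ≥ 1` and all positive integers `ν₁ ≥ ν₂ ≥ … ≥ ν_t` with `ν_t ≥ ν`,
`∑_{j ≤ t} log g(ν_j) ≤ C·(ν^{−2ε} + (log g(ν))²/ν)^{1/2}·(∑_{j ≤ t} j·ν_j)^{1/2}`. -/
theorem sum_log_g_le_of_large_min_exponent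
    (g : ℕ → ℕ) (hg0 : g 0 = 1) (hgmono : Monotone g) (ε : ℝ) (hε : 0 < ε)
    (hgratio : ∃ B : ℝ, ∀ i : ℕ, 1 ≤ i →
      |(g i : ℝ) / (g (i - 1) : ℝ) - 1| ≤ B * (i : ℝ) ^ (-(1 / 2 : ℝ) - ε)) :
    ∃ C : ℝ, 0 < C ∧ ∀ ν : ℕ, 1 ≤ ν → ∀ t : ℕ, 1 ≤ t → ∀ a : ℕ → ℕ,
      (∀ j : ℕ, 1 ≤ j → j ≤ t → 1 ≤ a j) →
      (∀ i j : ℕ, 1 ≤ i → i ≤ j → j ≤ t → a j ≤ a i) →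
      ν ≤ a t →
      ∑ j ∈ Finset.Icc 1 t, Real.log (g (a j)) ≤
        C * Real.sqrt ((ν : ℝ) ^ (-(2 * ε)) + (Real.log (g ν)) ^ 2 / ν) *
          Real.sqrt (∑ j ∈ Finset.Icc 1 t, (j : ℝ) * a j) := by
  have hg (n : ℕ) : (0 : ℝ) < g n := by
    exact_mod_cast (hg0 ▸ hgmono n.zero_le : 1 ≤ g n)
  obtain ⟨C, hC, hsum⟩ := sum_log_g_le_of_large_min_exponent_general hg hε
    (hgratio.imp fun B hB i hi => (le_abs_self _).trans (hB i hi))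
  exact ⟨C, hC, fun ν hν t _ a _ hanti hat => hsum ν hν (Icc 1 t) a (by simp) fun j hj =>
    hat.trans (hanti j t (mem_Icc.1 hj).1 (mem_Icc.1 hj).2 le_rfl)⟩
end

section
/- Under the standing hypotheses, for every ε̃ > 0 there is a constant C (depending on f, Q and ε̃) such that for every positive integer n with s := ω_Q(n) ≥ 2 one has f(n) ≤ C·( (c_f + ε̃)·log n / (s·log s) )^s. -/
/-!
Write `s` for the number of primes of `Q` dividing `n`, and `ν_p` for the exponent of `p` in `n`.
Primes outside `Q` contribute factors at most `1`, so `f n ≤ ∏ c ν_p = ∏ c (ν_p log p) (log p)⁻¹`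
over these `s` primes. By AM-GM, `∏ ν_p log p ≤ (log n / s) ^ s`, since `∑ ν_p log p ≤ log n`.
Again by AM-GM, `∏ (log p)⁻¹` is at most the `s`-th power of the average of `(log p)⁻¹`. At most
`s ^ θ` of the primes are below `s ^ θ`, so this average is at most `(θ⁻¹ + o(1)) / log s` for every
`θ < 1`, and the constant `C` absorbs the finitely many small `s`.
-/

section

open Filter Finset Real Topology

theorem prod_le_sum_div_card_pow_card {ι : Type*} (s : Finset ι) {z : ι → ℝ}
    (hz : ∀ i ∈ s, 0 ≤ z i) : ∏ i ∈ s, z i ≤ ((∑ i ∈ s, z i) / #s) ^ #s := by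
  obtain rfl | hs := s.eq_empty_or_nonempty
  · simp
  have hcard : 0 < #s := hs.card_pos
  have geom_le_arith : (∏ i ∈ s, z i) ^ (#s : ℝ)⁻¹ ≤ (∑ i ∈ s, z i) / #s := by
    simpa using geom_mean_le_arith_mean s (fun _ => 1) z (fun _ _ => zero_le_one)
      (by simpa using hs) hz
  have prod_nonneg : 0 ≤ ∏ i ∈ s, z i := Finset.prod_nonneg hz
  calc ∏ i ∈ s, z i = ((∏ i ∈ s, z i) ^ (#s : ℝ)⁻¹) ^ #s :=
        (rpow_inv_natCast_pow prod_nonneg hcard.ne').symm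
    _ ≤ ((∑ i ∈ s, z i) / #s) ^ #s := by gcongr

theorem card_filter_natCast_le_le {S : Finset ℕ} (hS : ∀ m ∈ S, 1 ≤ m) {x : ℝ} (hx : 0 ≤ x) :
    (#{m ∈ S | ((m : ℕ) : ℝ) ≤ x} : ℝ) ≤ x := by
  have subset_Icc : {m ∈ S | ((m : ℕ) : ℝ) ≤ x} ⊆ Icc 1 ⌊x⌋₊ := fun m hm => by
    obtain ⟨hmS, hmx⟩ := mem_filter.mp hm
    exact mem_Icc.mpr ⟨hS m hmS, Nat.le_floor hmx⟩
  calc (#{m ∈ S | ((m : ℕ) : ℝ) ≤ x} : ℝ) ≤ ⌊x⌋₊ := by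
        simpa using card_le_card subset_Icc
    _ ≤ x := Nat.floor_le hx

theorem sum_inv_log_le {S : Finset ℕ} (hS : ∀ m ∈ S, 2 ≤ m) {x : ℝ} (hx : 1 < x) :
    ∑ m ∈ S, (log m)⁻¹ ≤ x / log 2 + #S / log x := by
  have log_x_pos : 0 < log x := log_pos hx
  have small : ∑ m ∈ S with ((m : ℕ) : ℝ) ≤ x, (log m)⁻¹ ≤ x / log 2 :=
    calc ∑ m ∈ S with ((m : ℕ) : ℝ) ≤ x, (log m)⁻¹
        ≤ #{m ∈ S | ((m : ℕ) : ℝ) ≤ x} • (log 2)⁻¹ := by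
          refine sum_le_card_nsmul _ _ _ fun m hm => ?_
          have two_le : (2 : ℝ) ≤ m := mod_cast hS m (mem_filter.mp hm).1
          gcongr
      _ ≤ x / log 2 := by
          rw [nsmul_eq_mul, ← div_eq_mul_inv]
          gcongr
          exact card_filter_natCast_le_le (fun m hm => one_le_two.trans (hS m hm)) (by linarith)
  have large : ∑ m ∈ S with ¬((m : ℕ) : ℝ) ≤ x, (log m)⁻¹ ≤ #S / log x :=
    calc ∑ m ∈ S with ¬((m : ℕ) : ℝ) ≤ x, (log m)⁻¹
        ≤ #{m ∈ S | ¬((m : ℕ) : ℝ) ≤ x} • (log x)⁻¹ := by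
          refine sum_le_card_nsmul _ _ _ fun m hm => ?_
          have lt_m : x < m := not_le.mp (mem_filter.mp hm).2
          gcongr
      _ ≤ #S / log x := by
          rw [nsmul_eq_mul, ← div_eq_mul_inv]
          gcongr
          exact filter_subset _ _
  rw [← sum_filter_add_sum_filter_not S fun m : ℕ => (m : ℝ) ≤ x]
  exact add_le_add small large

/-- An upper bound for the average of `(log m)⁻¹` over any `s` integers `m ≥ 2`, obtained by
splitting these integers at `s ^ θ`. It is meant for `2 ≤ s`. -/
noncomputable def invLogAverageBound (θ : ℝ) (s : ℕ) : ℝ :=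
  ((s : ℝ) ^ θ / log 2 + s / log ((s : ℝ) ^ θ)) / s

theorem sum_inv_log_div_card_le {θ : ℝ} (hθ : 0 < θ) {S : Finset ℕ} (hS : ∀ m ∈ S, 2 ≤ m)
    (hcard : 2 ≤ #S) : (∑ m ∈ S, (log m)⁻¹) / #S ≤ invLogAverageBound θ #S := by
  unfold invLogAverageBound
  gcongr
  exact sum_inv_log_le hS (one_lt_rpow (mod_cast hcard) hθ)

theorem invLogAverageBound_nonneg {θ : ℝ} (hθ : 0 < θ) {s : ℕ} (hs : 2 ≤ s) :
    0 ≤ invLogAverageBound θ s := by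
  have log_rpow_pos : 0 < log ((s : ℝ) ^ θ) := log_pos (one_lt_rpow (mod_cast hs) hθ)
  exact div_nonneg (add_nonneg (by positivity) (div_nonneg s.cast_nonneg log_rpow_pos.le))
    s.cast_nonneg

theorem tendsto_log_mul_invLogAverageBound {θ : ℝ} (hθ : θ < 1) :
    Tendsto (fun s : ℕ => log s * invLogAverageBound θ s) atTop (𝓝 θ⁻¹) := by
  have log_div_rpow : Tendsto (fun s : ℕ => log s / (s : ℝ) ^ (1 - θ)) atTop (𝓝 0) :=
    (isLittleO_log_rpow_atTop (sub_pos.mpr hθ)).tendsto_div_nhds_zero.comp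
      tendsto_natCast_atTop_atTop
  have sum_tendsto :
      Tendsto (fun s : ℕ => log s / (s : ℝ) ^ (1 - θ) / log 2 + θ⁻¹) atTop (𝓝 θ⁻¹) := by
    simpa using (log_div_rpow.div_const (log 2)).add_const θ⁻¹
  refine sum_tendsto.congr' ?_
  filter_upwards [eventually_ge_atTop 2] with s hs
  have s_pos : (0 : ℝ) < s := by positivity
  have log_s_ne : log s ≠ 0 := (log_pos (mod_cast hs)).ne'
  rw [invLogAverageBound, log_rpow s_pos, rpow_sub s_pos, rpow_one]
  field_simp

theorem invLogAverageBound_pow_isBigO {θ K : ℝ} (hθ0 : 0 < θ) (hθ1 : θ < 1) (hK : θ⁻¹ < K) :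
    (fun s => invLogAverageBound θ s ^ s) =O[atTop] fun s : ℕ => (K / log s) ^ s := by
  refine .of_norm_eventuallyLE ?_
  filter_upwards [(tendsto_log_mul_invLogAverageBound hθ1).eventually_le_const hK,
    eventually_ge_atTop 2] with s log_mul_le hs
  have bound_nonneg : 0 ≤ invLogAverageBound θ s := invLogAverageBound_nonneg hθ0 hs
  have bound_le : invLogAverageBound θ s ≤ K / log s :=
    (le_div_iff₀' (log_pos (mod_cast hs))).mpr log_mul_le
  rw [norm_of_nonneg (pow_nonneg bound_nonneg s)]
  exact pow_le_pow_left₀ bound_nonneg bound_le s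

theorem exists_prod_inv_log_le {K : ℝ} (hK : 1 < K) :
    ∃ C > 0, ∀ S : Finset ℕ, (∀ m ∈ S, 2 ≤ m) → 2 ≤ #S →
      ∏ m ∈ S, (log m)⁻¹ ≤ C * (K / log #S) ^ #S := by
  have K_pos : 0 < K := one_pos.trans hK
  obtain ⟨θ, hKθ, hθ1⟩ := exists_between (inv_lt_one_of_one_lt₀ hK)
  have hθ0 : 0 < θ := (inv_pos.mpr K_pos).trans hKθ
  obtain ⟨C, hC, average_pow_le⟩ := Asymptotics.bound_of_isBigO_nat_atTop
    (invLogAverageBound_pow_isBigO hθ0 hθ1 (inv_lt_of_inv_lt₀ K_pos hKθ))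
  refine ⟨C, hC, fun S hS hcard => ?_⟩
  have inv_log_nonneg (m : ℕ) : 0 ≤ (log m)⁻¹ := inv_nonneg.mpr (log_natCast_nonneg m)
  have bound_pos : 0 < (K / log #S) ^ #S := pow_pos (div_pos K_pos (log_pos (mod_cast hcard))) _
  calc ∏ m ∈ S, (log m)⁻¹ ≤ ((∑ m ∈ S, (log m)⁻¹) / #S) ^ #S :=
        prod_le_sum_div_card_pow_card S fun m _ => inv_log_nonneg m
    _ ≤ invLogAverageBound θ #S ^ #S :=
        pow_le_pow_left₀ (div_nonneg (sum_nonneg fun m _ => inv_log_nonneg m) (Nat.cast_nonneg _))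
          (sum_inv_log_div_card_le hθ0 hS hcard) _
    _ ≤ ‖invLogAverageBound θ #S ^ #S‖ := le_norm_self _
    _ ≤ C * ‖(K / log #S) ^ #S‖ := average_pow_le bound_pos.ne'
    _ = C * (K / log #S) ^ #S := by rw [norm_of_nonneg bound_pos.le]

theorem sum_factorization_mul_log_le (n : ℕ) (S : Finset ℕ) :
    ∑ p ∈ S, n.factorization p * log p ≤ log n := by
  have term_nonneg (p : ℕ) : 0 ≤ n.factorization p * log p :=
    mul_nonneg (Nat.cast_nonneg _) (log_natCast_nonneg p)
  calc ∑ p ∈ S, n.factorization p * log p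
      ≤ ∑ p ∈ S ∪ n.primeFactors, n.factorization p * log p :=
        sum_le_sum_of_subset_of_nonneg subset_union_left fun p _ _ => term_nonneg p
    _ = ∑ p ∈ n.primeFactors, n.factorization p * log p :=
        (sum_subset subset_union_right fun p _ hp => by
          simp [Finsupp.notMem_support_iff.mp (n.support_factorization ▸ hp)]).symm
    _ = log n := (log_nat_eq_sum_factorization n).symm

theorem prod_factorization_mul_log_le (n : ℕ) (S : Finset ℕ) :
    ∏ p ∈ S, n.factorization p * log p ≤ (log n / #S) ^ #S := by
  have term_nonneg (p : ℕ) : 0 ≤ n.factorization p * log p :=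
    mul_nonneg (Nat.cast_nonneg _) (log_natCast_nonneg p)
  have sum_nonneg : 0 ≤ ∑ p ∈ S, n.factorization p * log p :=
    Finset.sum_nonneg fun p _ => term_nonneg p
  calc ∏ p ∈ S, n.factorization p * log p
      ≤ ((∑ p ∈ S, n.factorization p * log p) / #S) ^ #S :=
        prod_le_sum_div_card_pow_card S fun p _ => term_nonneg p
    _ ≤ (log n / #S) ^ #S := pow_le_pow_left₀ (div_nonneg sum_nonneg (Nat.cast_nonneg _))
        (div_le_div_of_nonneg_right (sum_factorization_mul_log_le n S) (Nat.cast_nonneg _)) _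

theorem exists_prod_factorization_le {K : ℝ} (hK : 1 < K) :
    ∃ C > 0, ∀ (n : ℕ) (S : Finset ℕ), (∀ p ∈ S, 2 ≤ p) → 2 ≤ #S →
      ∏ p ∈ S, (n.factorization p : ℝ) ≤ C * (K * log n / (#S * log #S)) ^ #S := by
  obtain ⟨C, hC, prod_inv_log_le⟩ := exists_prod_inv_log_le hK
  refine ⟨C, hC, fun n S hS hcard => ?_⟩
  have log_ne_zero (p : ℕ) (hp : p ∈ S) : log p ≠ 0 := (log_pos (mod_cast hS p hp)).ne'
  have prod_inv_log_nonneg : 0 ≤ ∏ p ∈ S, (log p)⁻¹ :=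
    prod_nonneg fun p _ => inv_nonneg.mpr (log_natCast_nonneg p)
  have log_pow_nonneg : 0 ≤ (log n / #S) ^ #S :=
    pow_nonneg (div_nonneg (log_natCast_nonneg n) (Nat.cast_nonneg _)) _
  calc ∏ p ∈ S, (n.factorization p : ℝ)
      = (∏ p ∈ S, n.factorization p * log p) * ∏ p ∈ S, (log p)⁻¹ := by
        rw [← prod_mul_distrib]
        exact prod_congr rfl fun p hp => (mul_inv_cancel_right₀ (log_ne_zero p hp) _).symm
    _ ≤ (log n / #S) ^ #S * (C * (K / log #S) ^ #S) :=
        mul_le_mul (prod_factorization_mul_log_le n S) (prod_inv_log_le S hS hcard)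
          prod_inv_log_nonneg log_pow_nonneg
    _ = C * (K * log n / (#S * log #S)) ^ #S := by
        rw [mul_left_comm, ← mul_pow, div_mul_div_comm, mul_comm (log n)]

theorem le_prod_filter_primeFactors_of_le_one {R : Type*} [CommSemiring R] [PartialOrder R]
    [IsOrderedRing R] {f : ℕ → R} (hf1 : f 1 = 1)
    (hfmult : ∀ m₁ m₂ : ℕ, m₁.Coprime m₂ → f (m₁ * m₂) = f m₁ * f m₂)
    (hf_nonneg : ∀ p ν : ℕ, p.Prime → 1 ≤ ν → 0 ≤ f (p ^ ν)) (Q : ℕ → Prop) [DecidablePred Q]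
    (hf_le_one : ∀ p ν : ℕ, p.Prime → ¬Q p → 1 ≤ ν → f (p ^ ν) ≤ 1) {n : ℕ} (hn : n ≠ 0) :
    f n ≤ ∏ p ∈ n.primeFactors with Q p, f (p ^ n.factorization p) := by
  have factorization_pos {p : ℕ} (hp : p ∈ n.primeFactors) : 1 ≤ n.factorization p :=
    (Nat.prime_of_mem_primeFactors hp).factorization_pos_of_dvd hn (Nat.dvd_of_mem_primeFactors hp)
  have factor_nonneg {p : ℕ} (hp : p ∈ n.primeFactors) : 0 ≤ f (p ^ n.factorization p) :=
    hf_nonneg p _ (Nat.prime_of_mem_primeFactors hp) (factorization_pos hp)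
  have f_eq : f n = ∏ p ∈ n.primeFactors, f (p ^ n.factorization p) :=
    Nat.multiplicative_factorization f hfmult hf1 hn
  rw [f_eq, ← prod_filter_mul_prod_filter_not n.primeFactors Q]
  refine mul_le_of_le_one_right
    (prod_nonneg fun p hp => factor_nonneg (mem_filter.mp hp).1)
    (prod_le_one (fun p hp => factor_nonneg (mem_filter.mp hp).1) fun p hp => ?_)
  obtain ⟨hpn, hpQ⟩ := mem_filter.mp hp
  exact hf_le_one p _ (Nat.prime_of_mem_primeFactors hpn) hpQ (factorization_pos hpn)

theorem f_le_of_many_prime_factors_general {c ε : ℝ} (hc : 0 < c) (hε : 0 < ε) :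
    ∃ C : ℝ, 0 < C ∧ ∀ (Q : ℕ → Prop) [DecidablePred Q] (f : ℕ → ℝ), f 1 = 1 →
      (∀ m₁ m₂ : ℕ, m₁.Coprime m₂ → f (m₁ * m₂) = f m₁ * f m₂) →
      (∀ p ν : ℕ, p.Prime → 1 ≤ ν → 0 ≤ f (p ^ ν)) →
      (∀ p ν : ℕ, p.Prime → Q p → 1 ≤ ν → f (p ^ ν) ≤ c * ν) →
      (∀ p ν : ℕ, p.Prime → ¬Q p → 1 ≤ ν → f (p ^ ν) ≤ 1) →
      ∀ n s : ℕ, n ≠ 0 → s = #{p ∈ n.primeFactors | Q p} → 2 ≤ s →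
        f n ≤ C * ((c + ε) * log n / (s * log s)) ^ s := by
  obtain ⟨C, hC, prod_factorization_le⟩ :=
    exists_prod_factorization_le ((one_lt_div hc).mpr (lt_add_of_pos_right c hε))
  refine ⟨C, hC, fun Q _ f hf1 hfmult hf_nonneg hfQ hfnotQ n s hn hs hs2 => ?_⟩
  set S := {p ∈ n.primeFactors | Q p}
  have prime_of_mem {p : ℕ} (hp : p ∈ S) : p.Prime :=
    Nat.prime_of_mem_primeFactors (mem_filter.mp hp).1
  have factorization_pos {p : ℕ} (hp : p ∈ S) : 1 ≤ n.factorization p :=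
    (prime_of_mem hp).factorization_pos_of_dvd hn
      (Nat.dvd_of_mem_primeFactors (mem_filter.mp hp).1)
  calc f n ≤ ∏ p ∈ S, f (p ^ n.factorization p) :=
        le_prod_filter_primeFactors_of_le_one hf1 hfmult hf_nonneg Q hfnotQ hn
    _ ≤ ∏ p ∈ S, c * n.factorization p :=
        prod_le_prod (fun p hp => hf_nonneg p _ (prime_of_mem hp) (factorization_pos hp))
          fun p hp => hfQ p _ (prime_of_mem hp) (mem_filter.mp hp).2 (factorization_pos hp)
    _ = c ^ s * ∏ p ∈ S, (n.factorization p : ℝ) := by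
        rw [prod_mul_distrib, prod_const, hs]
    _ ≤ c ^ s * (C * ((c + ε) / c * log n / (s * log s)) ^ s) := by
        gcongr
        exact hs ▸ prod_factorization_le n S (fun p hp => (prime_of_mem hp).two_le) (hs ▸ hs2)
    _ = C * ((c + ε) * log n / (s * log s)) ^ s := by
        rw [mul_left_comm, ← mul_pow]
        congr 2
        field_simp

end

open scoped Classical in
/-- For every `ε̃ > 0` there is a constant `C` (depending on `f`, `Q` and `ε̃`) such that
for every positive integer `n` with `s := ω_Q(n) ≥ 2` one has
`f(n) ≤ C·((c_f + ε̃)·log n/(s·log s))^s`. -/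
theorem f_le_of_many_prime_factors
    (q : ℕ → ℕ) (g f : ℕ → ℕ) (cf : ℝ)
    (hqprime : ∀ j : ℕ, 1 ≤ j → (q j).Prime)
    (hqmono : ∀ j : ℕ, 1 ≤ j → q j < q (j + 1))
    (hg0 : g 0 = 1) (hgmono : Monotone g)
    (hcf : 0 < cf)
    (hgsub : ∀ x : ℕ, 1 ≤ x → (g x : ℝ) ≤ cf * x)
    (hf0 : f 0 = 1) (hf1 : f 1 = 1)
    (hfmult : ∀ m₁ m₂ : ℕ, Nat.Coprime m₁ m₂ → f (m₁ * m₂) = f m₁ * f m₂)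
    (hfQ : ∀ p ν : ℕ, p.Prime → (∃ j, 1 ≤ j ∧ q j = p) → 1 ≤ ν → f (p ^ ν) = g ν)
    (hfnotQ : ∀ p ν : ℕ, p.Prime → ¬(∃ j, 1 ≤ j ∧ q j = p) → 1 ≤ ν →
      f (p ^ ν) = 0 ∨ f (p ^ ν) = 1)
    (εt : ℝ) (hεt : 0 < εt) :
    ∃ C : ℝ, 0 < C ∧ ∀ n s : ℕ, 0 < n →
      s = (n.primeFactors.filter fun p => ∃ j, 1 ≤ j ∧ q j = p).card →
      2 ≤ s →
      (f n : ℝ) ≤ C * ((cf + εt) * Real.log n / (s * Real.log s)) ^ s := by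
  obtain ⟨C, hC, hle⟩ := f_le_of_many_prime_factors_general hcf hεt
  refine ⟨C, hC, fun n s hn =>
    hle (fun p => ∃ j, 1 ≤ j ∧ q j = p) (fun m => (f m : ℝ)) (mod_cast hf1)
      (fun m₁ m₂ h => mod_cast hfmult m₁ m₂ h) (fun _ _ _ _ => Nat.cast_nonneg _)
      (fun p ν hp hpQ hν => hfQ p ν hp hpQ hν ▸ hgsub ν hν)
      (fun p ν hp hpQ hν => ?_) n s hn.ne'⟩
  rcases hfnotQ p ν hp hpQ hν with h | h <;> simp [h]
end

section
/- Under the standing hypotheses, let ε be the exponent from the hypothesis g(i)/g(i−1) = 1 + O(i^{−1/2−ε}) and set K = max{6, 2/ε}. There are constants C > 0 and n₀ such that the following holds for all n ≥ n₀: if N″ = v₁^{a₁}···v_s^{a_s}, where v₁ < … < v_s all belong to Q, each a_i is a positive integer with a_i ≤ (log₂ n)^K, and s > √(log n)/(log₂ n)^{K/2}, then log m_{N″} ≥ (1 − C·(log₃ n)/(log₂ n))·c_†·κ·((log₂ n)²/4)·∑_{j ≤ s} j·a_j, where m_{N″} is the least positive integer m with f(m) = N″. -/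
open Filter

/-!
Write `L = log log n` and let `m` be the least preimage of `N = ∏ v_i ^ a_i`. Since `N` has few
prime factors, some small prime `r ∈ Q` contributes the value `1` to `f m`. If another prime `p`
contributed `v_j * w` with `w > 1`, then moving a factor from `p` to `r` would, by superadditivity
of `g†`, shrink `m` as soon as `j` is much larger than `log r`. So for `j ≥ s / L ^ K` the prime
`v_j` only occurs as the full value of `f` at `a_j` prime powers `p ^ ν`, each with
`ν ≥ g† (v_j) ≥ g† (q_j) ≈ c_† κ j log j`. At most `s / L` of these `p` are below `s / L`, and
both `log j` and `log p` are about `L / 2` otherwise, so `log m` is essentially at least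
`c_† κ (L / 2) ^ 2 ∑ j a_j`. The omitted `j` and `p` cost `O(s² / L)` in a sum of size at
least `s² / 2`.
-/

/-- `leastPosPreimage h y` is the least positive integer that `h` maps to `y`, and `0` if there is
none. It is both the pseudo-inverse `g†` of `g` and, for `h = f` and `y = N`, the number `m_N`. -/
noncomputable def leastPosPreimage (h : ℕ → ℕ) (y : ℕ) : ℕ := sInf {x | 0 < x ∧ h x = y}

local postfix:max "†" => leastPosPreimage

/-- All prime factors of `m` lie in `Q`. For `m ≠ 0` this says that `m` belongs to the
multiplicative monoid `⟨Q⟩`; it also holds for `m = 0` if `Q` contains every prime. -/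
def FactorsIn (Q : Set ℕ) (m : ℕ) : Prop := ∀ p : ℕ, p.Prime → p ∣ m → p ∈ Q

/-- `g 0 = 1`, the image of `g` contains the monoid `⟨Q⟩`, and `g†` is strongly superadditive there
with constant `c`. The paper's condition `q₁ ≤ a` on `a ∈ ⟨Q⟩` is expressed as `1 < a`. -/
structure HasSuperadditiveInverse (Q : Set ℕ) (g : ℕ → ℕ) (c : ℝ) : Prop where
  map_zero : g 0 = 1
  exists_eq : ∀ m : ℕ, 0 < m → FactorsIn Q m → ∃ x : ℕ, g x = m
  superadditive : ∀ a b : ℕ, FactorsIn Q a → FactorsIn Q b → 1 < a → a ≤ b →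
    (g† b : ℝ) + c * b * g† a ≤ g† (a * b)

/-- `f` is multiplicative, follows `g` on the powers of the primes in `Q`, and takes only the values
`0` and `1` on all other prime powers. -/
structure IsMultiplicativeLift (Q : Set ℕ) (g f : ℕ → ℕ) : Prop where
  prime_of_mem : ∀ p ∈ Q, p.Prime
  map_zero : g 0 = 1
  map_one : f 1 = 1
  map_mul : ∀ m n : ℕ, m.Coprime n → f (m * n) = f m * f n
  map_prime_pow : ∀ p ν : ℕ, p.Prime → p ∈ Q → 1 ≤ ν → f (p ^ ν) = g ν
  map_prime_pow_of_notMem : ∀ p ν : ℕ, p.Prime → p ∉ Q → 1 ≤ ν → f (p ^ ν) = 0 ∨ f (p ^ ν) = 1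

/-- The contribution of the prime `p` to `f m` for a multiplicative function `f`. -/
def localValue (f : ℕ → ℕ) (m p : ℕ) : ℕ := f (p ^ m.factorization p)

section LeastPosPreimage

variable {h : ℕ → ℕ} {x y z : ℕ}

lemma leastPosPreimage_le (hx : 0 < x) (hxy : h x = y) : h† y ≤ x :=
  Nat.sInf_le ⟨hx, hxy⟩

lemma isLeast_leastPosPreimage (hy : ∃ x, 0 < x ∧ h x = y) :
    IsLeast {x | 0 < x ∧ h x = y} (h† y) :=
  ⟨Nat.sInf_mem hy, fun _ hx => Nat.sInf_le hx⟩

lemma leastPosPreimage_le_leastPosPreimage (hh : Monotone h) (hy : ∃ x, 0 < x ∧ h x = y)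
    (hz : ∃ x, 0 < x ∧ h x = z) (hyz : y ≤ z) : h† y ≤ h† z := by
  rcases hyz.eq_or_lt with rfl | hyz
  · exact le_rfl
  · refine (hh.reflect_lt ?_).le
    rwa [(isLeast_leastPosPreimage hy).1.2, (isLeast_leastPosPreimage hz).1.2]

end LeastPosPreimage

section FactorsIn

variable {Q : Set ℕ} {m n p : ℕ}

lemma FactorsIn.of_dvd (hn : FactorsIn Q n) (hmn : m ∣ n) : FactorsIn Q m :=
  fun p hp hpm => hn p hp (hpm.trans hmn)

lemma factorsIn_of_prime (hp : p.Prime) (hpQ : p ∈ Q) : FactorsIn Q p :=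
  fun _ hr hrp => (Nat.prime_dvd_prime_iff_eq hr hp).1 hrp ▸ hpQ

lemma FactorsIn.le_of_lowerBound {q₁ : ℕ} (hm : FactorsIn Q m) (hq₁ : q₁ ∈ lowerBounds Q)
    (h1 : 1 < m) : q₁ ≤ m := by
  obtain ⟨p, hp, hpm⟩ := Nat.exists_prime_and_dvd h1.ne'
  exact (hq₁ (hm p hp hpm)).trans (Nat.le_of_dvd (by omega) hpm)

lemma factorsIn_prod_pow {ι : Type*} {I : Finset ι} {v a : ι → ℕ} (hv : ∀ i ∈ I, (v i).Prime)
    (hvQ : ∀ i ∈ I, v i ∈ Q) : FactorsIn Q (∏ i ∈ I, v i ^ a i) := by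
  intro p hp hpN
  obtain ⟨i, hi, hpi⟩ := (Prime.dvd_finsetProd_iff hp.prime _).1 hpN
  exact factorsIn_of_prime (hv i hi) (hvQ i hi) p hp (hp.dvd_of_dvd_pow hpi)

end FactorsIn

section PrimeFactorization

open ArithmeticFunction

variable {ι : Type*} {S : Finset ι}

lemma cardFactors_finsetProd {h : ι → ℕ} (h0 : ∀ i ∈ S, h i ≠ 0) :
    cardFactors (∏ i ∈ S, h i) = ∑ i ∈ S, cardFactors (h i) := by
  have := cardFactors_multiset_prod (s := S.val.map h) (Finset.prod_ne_zero_iff.2 h0)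
  rwa [Multiset.map_map] at this

lemma cardFactors_prod_prime_pow {v a : ι → ℕ} (hv : ∀ i ∈ S, (v i).Prime) :
    cardFactors (∏ i ∈ S, v i ^ a i) = ∑ i ∈ S, a i := by
  rw [cardFactors_finsetProd fun i hi => pow_ne_zero _ (hv i hi).ne_zero]
  exact Finset.sum_congr rfl fun i hi => cardFactors_apply_prime_pow (hv i hi)

lemma card_filter_ne_one_le_cardFactors_prod {h : ι → ℕ} (h0 : ∀ i ∈ S, h i ≠ 0) :
    (S.filter fun i => h i ≠ 1).card ≤ cardFactors (∏ i ∈ S, h i) := by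
  rw [cardFactors_finsetProd h0, Finset.card_filter]
  refine Finset.sum_le_sum fun i hi => ?_
  split_ifs with h1
  · have : 1 < h i := by have := h0 i hi; omega
    exact cardFactors_pos_iff_one_lt.2 this
  · exact Nat.zero_le _

lemma factorization_prod_prime_pow {v a : ι → ℕ} (hv : ∀ i ∈ S, (v i).Prime)
    (hinj : Set.InjOn v S) {j : ι} (hj : j ∈ S) :
    (∏ i ∈ S, v i ^ a i).factorization (v j) = a j := by
  rw [Nat.factorization_prod fun i hi => pow_ne_zero _ (hv i hi).ne_zero,
    Finsupp.finsetSum_apply, Finset.sum_eq_single_of_mem j hj]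
  · simp [(hv j hj).factorization_self]
  · intro i hi hij
    have : v i ≠ v j := fun h => hij (hinj hi hj h)
    simp [(hv i hi).factorization, this]

lemma exists_eq_pow_mul_pow_mul {m p r : ℕ} (hm : m ≠ 0) (hp : p.Prime) (hr : r.Prime)
    (hpr : p ≠ r) : ∃ k, m = p ^ m.factorization p * (r ^ m.factorization r * k) ∧
      ¬ p ∣ k ∧ ¬ r ∣ k := by
  set n := m / p ^ m.factorization p with hn
  have hmn : p ^ m.factorization p * n = m := Nat.ordProj_mul_ordCompl_eq_self m p
  have hn0 : n ≠ 0 := fun h => hm (by rw [← hmn, h, mul_zero])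
  have hr_fact : n.factorization r = m.factorization r := by
    rw [hn, Nat.factorization_ordCompl, Finsupp.erase_ne hpr.symm]
  have hnk : r ^ m.factorization r * (n / r ^ m.factorization r) = n :=
    hr_fact ▸ Nat.ordProj_mul_ordCompl_eq_self n r
  refine ⟨n / r ^ m.factorization r, by rw [hnk, hmn], fun hpk => ?_, ?_⟩
  · exact Nat.not_dvd_ordCompl hp hm (hpk.trans (Dvd.intro_left _ hnk))
  · exact hr_fact ▸ Nat.not_dvd_ordCompl hr hn0

end PrimeFactorization

namespace HasSuperadditiveInverse

variable {Q : Set ℕ} {g : ℕ → ℕ} {c : ℝ} {y : ℕ}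

lemma exists_pos_eq (hg : HasSuperadditiveInverse Q g c) (hy : FactorsIn Q y) (h1 : 1 < y) :
    ∃ x, 0 < x ∧ g x = y := by
  obtain ⟨x, hx⟩ := hg.exists_eq y (by omega) hy
  refine ⟨x, Nat.pos_of_ne_zero ?_, hx⟩
  rintro rfl
  exact h1.ne (hg.map_zero.symm.trans hx)

lemma isLeast_inverse (hg : HasSuperadditiveInverse Q g c) (hy : FactorsIn Q y) (h1 : 1 < y) :
    IsLeast {x | 0 < x ∧ g x = y} (g† y) :=
  isLeast_leastPosPreimage (hg.exists_pos_eq hy h1)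

end HasSuperadditiveInverse

namespace IsMultiplicativeLift

variable {Q : Set ℕ} {g f : ℕ → ℕ} {m N p r : ℕ}

lemma map_pow (hf : IsMultiplicativeLift Q g f) (hp : p ∈ Q) (ν : ℕ) : f (p ^ ν) = g ν := by
  rcases ν.eq_zero_or_pos with rfl | hν
  · rw [pow_zero, hf.map_one, hf.map_zero]
  · exact hf.map_prime_pow p ν (hf.prime_of_mem p hp) hp hν

lemma exists_pos_map_eq {c : ℝ} (hf : IsMultiplicativeLift Q g f)
    (hg : HasSuperadditiveInverse Q g c) (hQ : Q.Nonempty) (hN0 : 0 < N) (hN : FactorsIn Q N) :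
    ∃ m, 0 < m ∧ f m = N := by
  obtain ⟨p, hp⟩ := hQ
  obtain ⟨x, hx⟩ := hg.exists_eq N hN0 hN
  exact ⟨p ^ x, pow_pos (hf.prime_of_mem p hp).pos x, (hf.map_pow hp x).trans hx⟩

lemma map_pow_mul_pow_mul (hf : IsMultiplicativeLift Q g f) (hp : p ∈ Q) (hr : r ∈ Q)
    (hpr : p ≠ r) {k : ℕ} (hpk : ¬ p ∣ k) (hrk : ¬ r ∣ k) (x y : ℕ) :
    f (p ^ x * (r ^ y * k)) = g x * (g y * f k) := by
  have hp' := hf.prime_of_mem p hp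
  have hr' := hf.prime_of_mem r hr
  have hcop_r : (r ^ y).Coprime k := (hr'.coprime_iff_not_dvd.2 hrk).pow_left y
  have hcop_p : (p ^ x).Coprime (r ^ y * k) :=
    (((Nat.coprime_primes hp' hr').2 hpr).pow x y).mul_right
      ((hp'.coprime_iff_not_dvd.2 hpk).pow_left x)
  rw [hf.map_mul _ _ hcop_p, hf.map_mul _ _ hcop_r, hf.map_pow hp, hf.map_pow hr]

lemma factorization_mul_log_add_le (hf : IsMultiplicativeLift Q g f)
    (hm : IsLeast {m | 0 < m ∧ f m = N} m) (hp : p ∈ Q) (hr : r ∈ Q) (hpr : p ≠ r) {x y : ℕ}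
    (hxy : g x * g y = g (m.factorization p) * g (m.factorization r)) :
    m.factorization p * Real.log p + m.factorization r * Real.log r ≤
      x * Real.log p + y * Real.log r := by
  have hp' := hf.prime_of_mem p hp
  have hr' := hf.prime_of_mem r hr
  obtain ⟨k, hmk, hpk, hrk⟩ := exists_eq_pow_mul_pow_mul hm.1.1.ne' hp' hr' hpr
  set μ := m.factorization p
  set ν := m.factorization r
  have hk : 0 < k := Nat.pos_of_ne_zero fun h => hpk (h ▸ dvd_zero p)
  have hle : m ≤ p ^ x * (r ^ y * k) := by
    refine hm.2 ⟨?_, ?_⟩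
    · exact Nat.mul_pos (pow_pos hp'.pos _) (Nat.mul_pos (pow_pos hr'.pos _) hk)
    · rw [← hm.1.2, hmk, hf.map_pow_mul_pow_mul hp hr hpr hpk hrk,
        hf.map_pow_mul_pow_mul hp hr hpr hpk hrk, ← mul_assoc, hxy, mul_assoc]
  rw [hmk, ← mul_assoc, ← mul_assoc] at hle
  have hle' : (p : ℝ) ^ μ * (r : ℝ) ^ ν ≤ (p : ℝ) ^ x * (r : ℝ) ^ y := by
    exact_mod_cast Nat.le_of_mul_le_mul_right hle hk
  have hp0 : (0 : ℝ) < p := by exact_mod_cast hp'.pos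
  have hr0 : (0 : ℝ) < r := by exact_mod_cast hr'.pos
  have := Real.log_le_log (by positivity) hle'
  rwa [Real.log_mul (by positivity) (by positivity), Real.log_mul (by positivity) (by positivity),
    Real.log_pow, Real.log_pow, Real.log_pow, Real.log_pow] at this

section LocalValue

lemma localValue_eq (hf : IsMultiplicativeLift Q g f) (hp : p ∈ Q) :
    localValue f m p = g (m.factorization p) :=
  hf.map_pow hp _

lemma mem_primeFactors_of_localValue_ne_one (hf : IsMultiplicativeLift Q g f)
    (h1 : localValue f m p ≠ 1) : p ∈ m.primeFactors := by
  rw [← Nat.support_factorization, Finsupp.mem_support_iff]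
  intro h0
  exact h1 (by rw [localValue, h0, pow_zero, hf.map_one])

lemma prod_localValue (hf : IsMultiplicativeLift Q g f) (hm : m ≠ 0) :
    ∏ p ∈ m.primeFactors, localValue f m p = f m :=
  (Nat.multiplicative_factorization f hf.map_mul hf.map_one hm).symm

lemma localValue_ne_zero (hf : IsMultiplicativeLift Q g f) (hm : m ≠ 0) (hfm : f m ≠ 0)
    (hp : p ∈ m.primeFactors) : localValue f m p ≠ 0 := by
  rw [← hf.prod_localValue hm] at hfm
  exact Finset.prod_ne_zero_iff.1 hfm p hp

lemma localValue_dvd (hf : IsMultiplicativeLift Q g f) (hm : m ≠ 0) (hp : p ∈ m.primeFactors) :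
    localValue f m p ∣ f m :=
  hf.prod_localValue hm ▸ Finset.dvd_prod_of_mem _ hp

lemma mem_of_localValue_ne_one (hf : IsMultiplicativeLift Q g f) (hm : m ≠ 0) (hfm : f m ≠ 0)
    (h1 : localValue f m p ≠ 1) : p ∈ Q := by
  have hpm := hf.mem_primeFactors_of_localValue_ne_one h1
  have hp := Nat.prime_of_mem_primeFactors hpm
  by_contra hpQ
  rcases hf.map_prime_pow_of_notMem p _ hp hpQ
    (hp.factorization_pos_of_dvd hm (Nat.dvd_of_mem_primeFactors hpm)) with h | h
  · exact hf.localValue_ne_zero hm hfm hpm h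
  · exact h1 h

lemma exists_mem_localValue_eq_one (hf : IsMultiplicativeLift Q g f) (hm : m ≠ 0) (hfm : f m ≠ 0)
    {T : Finset ℕ} (hT : ArithmeticFunction.cardFactors (f m) < T.card) :
    ∃ r ∈ T, localValue f m r = 1 := by
  have hcard := card_filter_ne_one_le_cardFactors_prod
    fun p hp => hf.localValue_ne_zero (p := p) hm hfm hp
  rw [hf.prod_localValue hm] at hcard
  obtain ⟨r, hrT, hr⟩ := Finset.exists_mem_notMem_of_card_lt_card (hcard.trans_lt hT)
  refine ⟨r, hrT, ?_⟩
  by_contra h1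
  exact hr (Finset.mem_filter.2 ⟨hf.mem_primeFactors_of_localValue_ne_one h1, h1⟩)

end LocalValue

section Exchange

variable {c : ℝ}

-- Moving the factor `a` of `g (m.factorization p) = a * b` from `p` to the idle prime `r` replaces
-- the exponent of `p` by `g† b`, which by superadditivity saves at least `c * b * g† a`.
lemma mul_log_le_log_of_le (hf : IsMultiplicativeLift Q g f) (hg : HasSuperadditiveInverse Q g c)
    (hm : IsLeast {m | 0 < m ∧ f m = N} m) (hp : p ∈ Q) (hr : r ∈ Q) {a b : ℕ}
    (ha : FactorsIn Q a) (hb : FactorsIn Q b) (ha1 : 1 < a) (hab : a ≤ b)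
    (hpm : localValue f m p = a * b) (hrm : localValue f m r = 1) :
    c * b * Real.log p ≤ Real.log r := by
  have hab1 : 1 < a * b := Nat.one_lt_mul_iff.2 ⟨by omega, by omega, Or.inl ha1⟩
  have hpr : p ≠ r := by
    rintro rfl
    exact hab1.ne (hrm.symm.trans hpm)
  have hν0 : 0 < m.factorization p := Nat.pos_of_ne_zero fun h0 =>
    hab1.ne (by rw [← hpm, localValue, h0, pow_zero, hf.map_one])
  rw [hf.localValue_eq hp] at hpm
  rw [hf.localValue_eq hr] at hrm
  have hga := (hg.isLeast_inverse ha ha1).1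
  have hgb := (hg.isLeast_inverse hb (ha1.trans_le hab)).1
  have hmin := hf.factorization_mul_log_add_le hm hp hr hpr (x := g† b) (y := g† a)
    (by rw [hga.2, hgb.2, hpm, hrm, mul_one, mul_comm])
  have hν : (g† b : ℝ) + c * b * g† a ≤ m.factorization p :=
    (hg.superadditive a b ha hb ha1 hab).trans (by exact_mod_cast leastPosPreimage_le hν0 hpm)
  have hlogr : 0 ≤ m.factorization r * Real.log r :=
    mul_nonneg (Nat.cast_nonneg _) (Real.log_natCast_nonneg r)
  have hga0 : (0 : ℝ) < g† a := by exact_mod_cast hga.1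
  refine le_of_mul_le_mul_left ?_ hga0
  calc g† a * (c * b * Real.log p)
      = (g† b + c * b * g† a) * Real.log p - g† b * Real.log p := by ring
    _ ≤ m.factorization p * Real.log p - g† b * Real.log p := by gcongr
    _ ≤ g† a * Real.log r := by linarith

lemma mul_log_le_log_of_localValue_eq_mul (hf : IsMultiplicativeLift Q g f)
    (hg : HasSuperadditiveInverse Q g c) (hc : 0 ≤ c) (hm : IsLeast {m | 0 < m ∧ f m = N} m)
    (hp : p ∈ Q) (hr : r ∈ Q) {v w : ℕ} (hv : FactorsIn Q v) (hw : FactorsIn Q w) (hv1 : 1 < v)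
    (hw1 : 1 < w) (hpm : localValue f m p = v * w) (hrm : localValue f m r = 1) :
    c * v * Real.log p ≤ Real.log r := by
  rcases le_total v w with hvw | hwv
  · calc c * v * Real.log p ≤ c * w * Real.log p := by gcongr
      _ ≤ Real.log r := hf.mul_log_le_log_of_le hg hm hp hr hv hw hv1 hvw hpm hrm
  · exact hf.mul_log_le_log_of_le hg hm hp hr hw hv hw1 hwv (hpm.trans (mul_comm v w)) hrm

lemma localValue_eq_of_dvd (hf : IsMultiplicativeLift Q g f) (hg : HasSuperadditiveInverse Q g c)
    (hc : 0 ≤ c) (hm : IsLeast {m | 0 < m ∧ f m = N} m) (hN : FactorsIn Q N) (hN0 : N ≠ 0)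
    (hr : r ∈ Q) (hrm : localValue f m r = 1) {v : ℕ} (hv : v.Prime)
    (hlarge : Real.log r < c * v * Real.log 2) (hdvd : v ∣ localValue f m p) :
    localValue f m p = v := by
  obtain ⟨⟨hm0, rfl⟩, -⟩ := id hm
  have h1 : localValue f m p ≠ 1 := fun h1 => hv.one_lt.ne' (Nat.dvd_one.1 (h1 ▸ hdvd))
  have hpm := hf.mem_primeFactors_of_localValue_ne_one h1
  have hfac := hN.of_dvd (hf.localValue_dvd hm0.ne' hpm)
  have h0 := hf.localValue_ne_zero hm0.ne' hN0 hpm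
  obtain ⟨w, hw⟩ := hdvd
  by_contra hne
  have hw0 : w ≠ 0 := fun h => h0 (by rw [hw, h, mul_zero])
  have hw1 : w ≠ 1 := fun h => hne (by rw [hw, h, mul_one])
  rw [hw] at hfac
  have hle := hf.mul_log_le_log_of_localValue_eq_mul hg hc hm
    (hf.mem_of_localValue_ne_one hm0.ne' hN0 h1) hr (hfac.of_dvd (Dvd.intro _ rfl))
    (hfac.of_dvd (Dvd.intro_left _ rfl)) hv.one_lt (by omega) hw hrm
  have hlog2 : Real.log 2 ≤ Real.log p :=
    Real.log_le_log two_pos (by exact_mod_cast (Nat.prime_of_mem_primeFactors hpm).two_le)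
  have : c * v * Real.log 2 ≤ c * v * Real.log p := by gcongr
  linarith

lemma card_localValue_eq (hf : IsMultiplicativeLift Q g f) (hm : m ≠ 0) (hfm : f m ≠ 0) {v : ℕ}
    (hv : v.Prime) (halone : ∀ p, v ∣ localValue f m p → localValue f m p = v) :
    (m.primeFactors.filter fun p => localValue f m p = v).card = (f m).factorization v := by
  rw [← hf.prod_localValue hm,
    Nat.factorization_prod fun p hp => hf.localValue_ne_zero hm hfm hp,
    Finsupp.finsetSum_apply, Finset.card_filter]
  refine Finset.sum_congr rfl fun p _ => ?_
  split_ifs with h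
  · rw [h, hv.factorization_self]
  · exact (Nat.factorization_eq_zero_of_not_dvd fun hd => h (halone p hd)).symm

end Exchange

end IsMultiplicativeLift

section Counting

lemma card_filter_cast_le {S : Finset ℕ} (hS : ∀ n ∈ S, 0 < n) {y : ℝ} (hy : 0 ≤ y) :
    ((S.filter fun n : ℕ => (n : ℝ) ≤ y).card : ℝ) ≤ y := by
  have hsub : (S.filter fun n : ℕ => (n : ℝ) ≤ y) ⊆ Finset.Icc 1 ⌊y⌋₊ := fun n hn =>
    have ⟨hnS, hny⟩ := Finset.mem_filter.1 hn
    Finset.mem_Icc.2 ⟨hS n hnS, Nat.le_floor hny⟩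
  have hcard : (S.filter fun n : ℕ => (n : ℝ) ≤ y).card ≤ ⌊y⌋₊ := by
    simpa using Finset.card_le_card hsub
  exact (Nat.cast_le.2 hcard).trans (Nat.floor_le hy)

lemma sum_card_mul_log_le {ι : Type*} {I : Finset ι} {T : ι → Finset ℕ} {S : Finset ℕ}
    (hT : (I : Set ι).PairwiseDisjoint T) (hTS : ∀ i ∈ I, T i ⊆ S) (hS : ∀ n ∈ S, 0 < n)
    {w : ι → ℝ} {ν : ℕ → ℝ} {W y : ℝ} (hν : ∀ n ∈ S, 0 ≤ ν n) (hwν : ∀ i ∈ I, ∀ n ∈ T i, w i ≤ ν n)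
    (hwW : ∀ i ∈ I, w i ≤ W) (hW : 0 ≤ W) (hy : 1 ≤ y) :
    (∑ i ∈ I, (T i).card * w i) * Real.log y ≤ ∑ n ∈ S, ν n * Real.log n + W * y * Real.log y := by
  classical
  have hlogy : 0 ≤ Real.log y := Real.log_nonneg hy
  set F : ℕ → ℝ := fun n => ν n * Real.log n + if (n : ℝ) ≤ y then W * Real.log y else 0 with hF
  have hνlog : ∀ n ∈ S, 0 ≤ ν n * Real.log n := fun n hn =>
    mul_nonneg (hν n hn) (Real.log_natCast_nonneg n)
  have hF0 : ∀ n ∈ S, 0 ≤ F n := fun n hn =>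
    add_nonneg (hνlog n hn) (by split_ifs <;> positivity)
  have hwF : ∀ i ∈ I, ∀ n ∈ T i, w i * Real.log y ≤ F n := by
    intro i hi n hn
    have hnS := hTS i hi hn
    by_cases hny : (n : ℝ) ≤ y
    · rw [hF]
      simp only [if_pos hny]
      have := mul_le_mul_of_nonneg_right (hwW i hi) hlogy
      linarith [hνlog n hnS]
    · rw [hF]
      simp only [if_neg hny, add_zero]
      calc w i * Real.log y ≤ ν n * Real.log y := by gcongr; exact hwν i hi n hn
        _ ≤ ν n * Real.log n := by
          gcongr
          exacts [hν n hnS, (not_le.1 hny).le]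
  calc (∑ i ∈ I, (T i).card * w i) * Real.log y
      = ∑ i ∈ I, ∑ _n ∈ T i, w i * Real.log y := by
        simp only [Finset.sum_mul, Finset.sum_const, nsmul_eq_mul, mul_assoc]
    _ ≤ ∑ i ∈ I, ∑ n ∈ T i, F n :=
        Finset.sum_le_sum fun i hi => Finset.sum_le_sum fun n hn => hwF i hi n hn
    _ = ∑ n ∈ I.biUnion T, F n := (Finset.sum_biUnion hT).symm
    _ ≤ ∑ n ∈ S, F n := Finset.sum_le_sum_of_subset_of_nonneg (Finset.biUnion_subset.2 hTS)
        fun n hn _ => hF0 n hn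
    _ = ∑ n ∈ S, ν n * Real.log n
          + (S.filter fun n : ℕ => (n : ℝ) ≤ y).card * (W * Real.log y) := by
        rw [hF, Finset.sum_add_distrib, ← Finset.sum_filter, Finset.sum_const, nsmul_eq_mul]
    _ ≤ ∑ n ∈ S, ν n * Real.log n + y * (W * Real.log y) := by
        gcongr
        exact card_filter_cast_le hS (by linarith)
    _ = ∑ n ∈ S, ν n * Real.log n + W * y * Real.log y := by ring

end Counting

section LowerBound

variable {Q : Set ℕ} {g f : ℕ → ℕ} {c : ℝ} {m N r : ℕ}

lemma IsMultiplicativeLift.sum_factorization_mul_log_le (hf : IsMultiplicativeLift Q g f)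
    (hg : HasSuperadditiveInverse Q g c) (hc : 0 ≤ c) (hm : IsLeast {m | 0 < m ∧ f m = N} m)
    (hN : FactorsIn Q N) (hN0 : N ≠ 0) (hr : r ∈ Q) (hrm : localValue f m r = 1)
    {ι : Type*} {I : Finset ι} {v : ι → ℕ} (hv : ∀ i ∈ I, (v i).Prime) (hinj : Set.InjOn v I)
    (hlarge : ∀ i ∈ I, Real.log r < c * v i * Real.log 2) {w : ι → ℝ} {W y : ℝ}
    (hwg : ∀ i ∈ I, w i ≤ g† (v i)) (hwW : ∀ i ∈ I, w i ≤ W) (hW : 0 ≤ W) (hy : 1 ≤ y) :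
    (∑ i ∈ I, N.factorization (v i) * w i) * Real.log y ≤ Real.log m + W * y * Real.log y := by
  obtain ⟨⟨hm0, rfl⟩, -⟩ := id hm
  set T : ι → Finset ℕ := fun i => m.primeFactors.filter fun p => localValue f m p = v i
  have hcard : ∀ i ∈ I, (T i).card = (f m).factorization (v i) := fun i hi =>
    hf.card_localValue_eq hm0.ne' hN0 (hv i hi) fun _ hdvd =>
      hf.localValue_eq_of_dvd hg hc hm hN hN0 hr hrm (hv i hi) (hlarge i hi) hdvd
  have hdisj : (I : Set ι).PairwiseDisjoint T := fun i hi j hj hij =>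
    Finset.disjoint_filter.2 fun p _ hpi hpj => hij (hinj hi hj (hpi.symm.trans hpj))
  have hexp : ∀ i ∈ I, ∀ p ∈ T i, w i ≤ m.factorization p := by
    intro i hi p hp
    obtain ⟨hpm, hpv⟩ := Finset.mem_filter.1 hp
    have hpQ : p ∈ Q := hf.mem_of_localValue_ne_one hm0.ne' hN0 (hpv ▸ (hv i hi).ne_one)
    have hpos : 0 < m.factorization p :=
      (Nat.prime_of_mem_primeFactors hpm).factorization_pos_of_dvd hm0.ne'
        (Nat.dvd_of_mem_primeFactors hpm)
    have hle : g† (v i) ≤ m.factorization p :=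
      leastPosPreimage_le hpos ((hf.localValue_eq hpQ).symm.trans hpv)
    exact (hwg i hi).trans (by exact_mod_cast hle)
  have hcount := sum_card_mul_log_le hdisj (fun i _ => Finset.filter_subset _ _)
    (fun p hp => (Nat.prime_of_mem_primeFactors hp).pos)
    (fun p _ => Nat.cast_nonneg (m.factorization p)) hexp hwW hW hy
  rw [Finset.sum_congr rfl fun i hi => by rw [hcard i hi]] at hcount
  rwa [Real.log_nat_eq_sum_factorization]

end LowerBound

section PrimeSequence

variable {q v : ℕ → ℕ} {s : ℕ}

lemma le_apply_of_strictMonoOn_Ici_one (hq : StrictMonoOn q (Set.Ici 1)) (hq1 : 1 ≤ q 1) {j : ℕ}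
    (hj : 1 ≤ j) : j ≤ q j := by
  induction j, hj using Nat.le_induction with
  | base => exact hq1
  | succ j hj ih => exact ih.trans_lt (hq hj (Nat.le_succ_of_le hj) j.lt_succ_self)

lemma apply_le_of_strictMonoOn_of_mapsTo (hq : StrictMonoOn q (Set.Ici 1))
    (hv : StrictMonoOn v (Set.Icc 1 s)) (hvq : Set.MapsTo v (Set.Icc 1 s) (q '' Set.Ici 1))
    {i : ℕ} (hi : i ∈ Set.Icc 1 s) : q i ≤ v i := by
  obtain ⟨hi1, his⟩ := hi
  induction i, hi1 using Nat.le_induction with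
  | base =>
    obtain ⟨k, hk, hkv⟩ := hvq ⟨le_rfl, his⟩
    exact hkv ▸ hq.monotoneOn (Set.mem_Ici.2 le_rfl) hk hk
  | succ i hi1 ih =>
    obtain ⟨k, hk, hkv⟩ := hvq ⟨Nat.le_succ_of_le hi1, his⟩
    have hlt : q i < q k := hkv ▸ (ih (by omega)).trans_lt
      (hv ⟨hi1, by omega⟩ ⟨by omega, his⟩ i.lt_succ_self)
    have hik : i + 1 ≤ k := (hq.lt_iff_lt hi1 hk).1 hlt
    exact hkv ▸ hq.monotoneOn (Set.mem_Ici.2 (by omega)) hk hik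

lemma le_apply_of_mapsTo (hq : StrictMonoOn q (Set.Ici 1)) (hq1 : 1 ≤ q 1)
    (hv : StrictMonoOn v (Set.Icc 1 s)) (hvq : Set.MapsTo v (Set.Icc 1 s) (q '' Set.Ici 1))
    {i : ℕ} (hi : i ∈ Set.Icc 1 s) : i ≤ v i :=
  (le_apply_of_strictMonoOn_Ici_one hq hq1 hi.1).trans
    (apply_le_of_strictMonoOn_of_mapsTo hq hv hvq hi)

variable {g f a : ℕ → ℕ} {c : ℝ}

lemma IsMultiplicativeLift.exists_index_localValue_eq_one
    (hf : IsMultiplicativeLift (q '' Set.Ici 1) g f) (hq : StrictMonoOn q (Set.Ici 1)) {m A : ℕ}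
    (hm : m ≠ 0) (hfm : f m ≠ 0) (hA : ArithmeticFunction.cardFactors (f m) ≤ A) :
    ∃ t ∈ Set.Icc 1 (A + 1), localValue f m (q t) = 1 := by
  have hinj : Set.InjOn q (Finset.Icc 1 (A + 1)) := hq.injOn.mono fun t ht =>
    (Finset.mem_Icc.1 ht).1
  obtain ⟨r, hr, hrm⟩ := hf.exists_mem_localValue_eq_one hm hfm
    (T := (Finset.Icc 1 (A + 1)).image q)
    (by rw [Finset.card_image_of_injOn hinj, Nat.card_Icc]; omega)
  obtain ⟨t, ht, rfl⟩ := Finset.mem_image.1 hr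
  exact ⟨t, Finset.mem_Icc.1 ht, hrm⟩

lemma IsMultiplicativeLift.isLeast_prod_pow (hf : IsMultiplicativeLift (q '' Set.Ici 1) g f)
    (hg : HasSuperadditiveInverse (q '' Set.Ici 1) g c)
    (hvq : Set.MapsTo v (Set.Icc 1 s) (q '' Set.Ici 1)) :
    IsLeast {m | 0 < m ∧ f m = ∏ i ∈ Finset.Icc 1 s, v i ^ a i}
      (f† (∏ i ∈ Finset.Icc 1 s, v i ^ a i)) := by
  have hvQ : ∀ j ∈ Finset.Icc 1 s, v j ∈ q '' Set.Ici 1 := fun j hj => hvq (Finset.mem_Icc.1 hj)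
  have hvp : ∀ j ∈ Finset.Icc 1 s, (v j).Prime := fun j hj => hf.prime_of_mem _ (hvQ j hj)
  exact isLeast_leastPosPreimage (hf.exists_pos_map_eq hg (Set.nonempty_Ici.image q)
    (Finset.prod_pos fun i hi => pow_pos (hvp i hi).pos _) (factorsIn_prod_pow hvp hvQ))

lemma IsMultiplicativeLift.mul_log_mul_sum_sub_le_log
    (hf : IsMultiplicativeLift (q '' Set.Ici 1) g f)
    (hg : HasSuperadditiveInverse (q '' Set.Ici 1) g c) (hc : 0 < c)
    (hq : StrictMonoOn q (Set.Ici 1)) (hv : StrictMonoOn v (Set.Icc 1 s))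
    (hvq : Set.MapsTo v (Set.Icc 1 s) (q '' Set.Ici 1)) {J : ℕ} (hJ : 1 ≤ J)
    (hqJ : ∀ t ∈ Set.Icc 1 (∑ i ∈ Finset.Icc 1 s, a i + 1), Real.log (q t) < c * J * Real.log 2)
    {G y : ℝ} (hG : 0 ≤ G) (hy : 1 ≤ y) (hGv : ∀ j ∈ Set.Icc J s, G * j ≤ g† (v j)) :
    G * Real.log y * (∑ j ∈ Finset.Icc J s, (j : ℝ) * a j - s * y) ≤
      Real.log (f† (∏ i ∈ Finset.Icc 1 s, v i ^ a i)) := by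
  set N := ∏ i ∈ Finset.Icc 1 s, v i ^ a i
  have hsub : Finset.Icc J s ⊆ Finset.Icc 1 s := Finset.Icc_subset_Icc_left hJ
  have hvQ : ∀ j ∈ Finset.Icc 1 s, v j ∈ q '' Set.Ici 1 := fun j hj => hvq (Finset.mem_Icc.1 hj)
  have hvp : ∀ j ∈ Finset.Icc 1 s, (v j).Prime := fun j hj => hf.prime_of_mem _ (hvQ j hj)
  have hinj : Set.InjOn v (Finset.Icc 1 s) := by simpa using hv.injOn
  have hN0 : N ≠ 0 := Finset.prod_ne_zero_iff.2 fun i hi => pow_ne_zero _ (hvp i hi).ne_zero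
  have hm : IsLeast {m | 0 < m ∧ f m = N} (f† N) := hf.isLeast_prod_pow hg hvq
  obtain ⟨t, ht, htm⟩ := hf.exists_index_localValue_eq_one hq hm.1.1.ne' (hm.1.2.symm ▸ hN0)
    (by rw [hm.1.2, cardFactors_prod_prime_pow hvp])
  have hlarge : ∀ j ∈ Finset.Icc J s, Real.log (q t) < c * v j * Real.log 2 := fun j hj => by
    have hJj : J ≤ j := (Finset.mem_Icc.1 hj).1
    have hq1 : 1 ≤ q 1 := (hf.prime_of_mem _ ⟨1, Set.mem_Ici.2 le_rfl, rfl⟩).one_le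
    have hjv := le_apply_of_mapsTo hq hq1 hv hvq (Finset.mem_Icc.1 (hsub hj))
    exact (hqJ t ht).trans_le (by gcongr; exact hJj.trans hjv)
  have hbound := hf.sum_factorization_mul_log_le hg hc.le hm (factorsIn_prod_pow hvp hvQ) hN0
    (Set.mem_image_of_mem q ht.1) htm (fun j hj => hvp j (hsub hj))
    (hinj.mono (Finset.coe_subset.2 hsub)) hlarge
    (fun j hj => hGv j (Finset.mem_Icc.1 hj)) (W := G * s)
    (fun j hj => by gcongr; exact (Finset.mem_Icc.1 hj).2) (by positivity) hy
  have hsum : ∑ j ∈ Finset.Icc J s, N.factorization (v j) * (G * j) =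
      G * ∑ j ∈ Finset.Icc J s, (j : ℝ) * a j := by
    rw [Finset.mul_sum]
    refine Finset.sum_congr rfl fun j hj => ?_
    rw [factorization_prod_prime_pow hvp hinj (hsub hj)]
    ring
  rw [hsum] at hbound
  linarith

end PrimeSequence

section Sums

variable {s : ℕ} {a : ℕ → ℕ}

lemma sq_div_two_le_sum_mul (ha : ∀ i ∈ Set.Icc 1 s, 1 ≤ a i) :
    (s : ℝ) ^ 2 / 2 ≤ ∑ j ∈ Finset.Icc 1 s, (j : ℝ) * a j := by
  have hgauss : (s : ℝ) ^ 2 / 2 ≤ ∑ j ∈ Finset.Icc 1 s, (j : ℝ) := by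
    induction s with
    | zero => simp
    | succ k ih =>
      rw [Finset.sum_Icc_succ_top (by omega)]
      push_cast
      linarith [ih fun i hi => ha i ⟨hi.1, Nat.le_succ_of_le hi.2⟩]
  refine hgauss.trans (Finset.sum_le_sum fun j hj => ?_)
  exact le_mul_of_one_le_right (Nat.cast_nonneg j)
    (by exact_mod_cast ha j (Finset.mem_Icc.1 hj))

lemma sum_mul_sub_sq_div_le {X : ℝ} (hX : 0 < X) (ha : ∀ i ∈ Set.Icc 1 s, (a i : ℝ) ≤ X) :
    ∑ j ∈ Finset.Icc 1 s, (j : ℝ) * a j - (s : ℝ) ^ 2 / X ≤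
      ∑ j ∈ Finset.Icc ⌈(s : ℝ) / X⌉₊ s, (j : ℝ) * a j := by
  set I := Finset.Icc 1 s
  set small : ℕ → Prop := fun j => (j : ℝ) ≤ s / X
  have hlarge : ∑ j ∈ I with ¬ small j, (j : ℝ) * a j ≤
      ∑ j ∈ Finset.Icc ⌈(s : ℝ) / X⌉₊ s, (j : ℝ) * a j := by
    refine Finset.sum_le_sum_of_subset_of_nonneg (fun j hj => ?_) fun j _ _ => by positivity
    obtain ⟨hjI, hj⟩ := Finset.mem_filter.1 hj
    exact Finset.mem_Icc.2 ⟨Nat.ceil_le.2 (not_le.1 hj).le, (Finset.mem_Icc.1 hjI).2⟩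
  have hsmall : ∑ j ∈ I with small j, (j : ℝ) * a j ≤ (s : ℝ) ^ 2 / X :=
    calc ∑ j ∈ I with small j, (j : ℝ) * a j
        ≤ (I.filter small).card • (s / X * X) := by
          refine Finset.sum_le_card_nsmul _ _ _ fun j hj => ?_
          obtain ⟨hjI, hj⟩ := Finset.mem_filter.1 hj
          gcongr
          exact ha j (Finset.mem_Icc.1 hjI)
      _ ≤ s / X * (s / X * X) := by
          rw [nsmul_eq_mul]
          gcongr
          exact card_filter_cast_le (fun j hj => (Finset.mem_Icc.1 hj).1) (by positivity)
      _ = (s : ℝ) ^ 2 / X := by field_simp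
  have hsplit := Finset.sum_filter_add_sum_filter_not I small fun j : ℕ => (j : ℝ) * a j
  linarith

end Sums

section SequenceAsymptotics

variable {q : ℕ → ℕ} {κ : ℝ}

lemma exists_forall_le_mul_sq (hκ : 0 < κ) (hq : ∃ A : ℝ, ∀ j : ℕ, 2 ≤ j →
      |(q j : ℝ) - κ * j * (Real.log j + Real.log (Real.log j))| ≤ A * (κ * j)) :
    ∃ D : ℝ, 0 < D ∧ ∀ t : ℕ, 1 ≤ t → (q t : ℝ) ≤ D * (t : ℝ) ^ 2 := by
  obtain ⟨A, hA⟩ := hq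
  refine ⟨κ * (2 + |A|) + q 1, by positivity, fun t ht => ?_⟩
  rcases ht.eq_or_lt with rfl | ht2
  · have : 0 ≤ κ * (2 + |A|) := by positivity
    push_cast
    linarith
  have ht2' : (2 : ℝ) ≤ t := by exact_mod_cast ht2
  have hlog0 : 0 < Real.log t := Real.log_pos (by linarith)
  have hlog : Real.log t ≤ t := Real.log_le_self (by linarith)
  have hloglog : Real.log (Real.log t) ≤ t := (Real.log_le_self hlog0.le).trans hlog
  have hAt : A ≤ |A| * t :=
    (le_abs_self A).trans (le_mul_of_one_le_right (abs_nonneg A) (by linarith))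
  have hqt := (abs_le.1 (hA t ht2)).2
  calc (q t : ℝ) ≤ κ * t * (Real.log t + Real.log (Real.log t) + A) := by linarith
    _ ≤ κ * t * (t + t + |A| * t) := by gcongr
    _ = κ * (2 + |A|) * (t : ℝ) ^ 2 := by ring
    _ ≤ (κ * (2 + |A|) + q 1) * (t : ℝ) ^ 2 := by gcongr; simp

lemma one_le_log_natCast {j : ℕ} (hj : 3 ≤ j) : 1 ≤ Real.log j := by
  have hj' : (3 : ℝ) ≤ j := by exact_mod_cast hj
  rw [Real.le_log_iff_exp_le (by linarith)]
  linarith [Real.exp_one_lt_d9]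

lemma mul_log_sub_abs_le {x A : ℝ} {j : ℕ} (hκ : 0 ≤ κ) (hj : 3 ≤ j)
    (hx : |x - κ * j * (Real.log j + Real.log (Real.log j))| ≤ A * (κ * j)) :
    κ * j * (Real.log j - |A|) ≤ x := by
  have hloglog : 0 ≤ Real.log (Real.log j) := Real.log_nonneg (one_le_log_natCast hj)
  calc κ * j * (Real.log j - |A|) ≤ κ * j * (Real.log j + Real.log (Real.log j) - A) := by
        gcongr
        · linarith
        · exact le_abs_self A
    _ ≤ x := by linarith [(abs_le.1 hx).1]

lemma mul_sub_div_log_le {y d B : ℝ} {j m : ℕ} (hj : 3 ≤ j) (hjm : j ≤ m)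
    (hy : |y - d * m| ≤ B * m / Real.log m) : (d - |B| / Real.log j) * m ≤ y := by
  have hlogj := one_le_log_natCast hj
  have hlog : Real.log j ≤ Real.log m :=
    Real.log_le_log (by exact_mod_cast (by omega : 0 < j)) (by exact_mod_cast hjm)
  have hB : B * m / Real.log m ≤ |B| * m / Real.log j := by
    gcongr
    exact le_abs_self B
  calc (d - |B| / Real.log j) * m = d * m - |B| * m / Real.log j := by ring
    _ ≤ y := by linarith [(abs_le.1 hy).1]

lemma exists_forall_mul_log_sub_mul_le {h : ℕ → ℕ} {d : ℝ} (hκ : 0 < κ) (hd : 0 < d)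
    (hjq : ∀ j, 1 ≤ j → j ≤ q j)
    (hq : ∃ A : ℝ, ∀ j : ℕ, 2 ≤ j →
      |(q j : ℝ) - κ * j * (Real.log j + Real.log (Real.log j))| ≤ A * (κ * j))
    (hh : ∃ B : ℝ, ∀ j : ℕ, 1 ≤ j →
      |(h (q j) : ℝ) - d * q j| ≤ B * (q j : ℝ) / Real.log (q j)) :
    ∃ C₁ : ℝ, 0 ≤ C₁ ∧ ∀ j : ℕ, 3 ≤ j → d * κ * (Real.log j - C₁) * j ≤ h (q j) := by
  obtain ⟨A, hA⟩ := hq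
  obtain ⟨B, hB⟩ := hh
  refine ⟨|A| + |B| / d, by positivity, fun j hj => ?_⟩
  have hlogj : 0 < Real.log j := one_pos.trans_le (one_le_log_natCast hj)
  rcases le_total (Real.log j) (|A| + |B| / d) with hsmall | hlarge
  · exact (mul_nonpos_of_nonpos_of_nonneg (mul_nonpos_of_nonneg_of_nonpos (by positivity)
      (by linarith)) j.cast_nonneg).trans (Nat.cast_nonneg _)
  have hBlog : |B| / Real.log j ≤ d := by
    rw [div_le_iff₀ hlogj, ← div_le_iff₀' hd]
    linarith [abs_nonneg A]
  calc d * κ * (Real.log j - (|A| + |B| / d)) * j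
      ≤ d * κ * (Real.log j - (|A| + |B| / d)) * j + κ * j * (|A| * (|B| / Real.log j)) :=
        le_add_of_nonneg_right (by positivity)
    _ = (d - |B| / Real.log j) * (κ * j * (Real.log j - |A|)) := by field_simp; ring
    _ ≤ (d - |B| / Real.log j) * q j := by
        gcongr
        exact mul_log_sub_abs_le hκ.le hj (hA j (by omega))
    _ ≤ h (q j) := mul_sub_div_log_le hj (hjq j (by omega)) (hB j (by omega))

end SequenceAsymptotics

section Growth

variable {K : ℝ}

lemma tendsto_exp_half_div_rpow_atTop (K : ℝ) :
    Tendsto (fun L : ℝ => Real.exp (L / 2) / L ^ K) atTop atTop := by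
  simpa [div_eq_inv_mul] using tendsto_exp_mul_div_rpow_atTop K (1 / 2) (by norm_num)

lemma eventually_rpow_le_sqrt (K : ℝ) : ∀ᶠ L : ℝ in atTop, ∀ s : ℝ,
    Real.exp (L / 2) / L ^ (K / 2) < s → L ^ K ≤ √s := by
  filter_upwards [(tendsto_exp_half_div_rpow_atTop (K / 2 + 2 * K)).eventually_ge_atTop 1,
    eventually_gt_atTop 0] with L hL hL0 s hs
  refine Real.le_sqrt_of_sq_le (le_trans ?_ hs.le)
  rw [Real.rpow_add hL0, ← div_div, one_le_div (by positivity)] at hL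
  rwa [← Real.rpow_mul_natCast hL0.le, mul_comm K, Nat.cast_ofNat]

lemma eventually_forall_of_exp_half_div_rpow_lt {P : ℝ → Prop} (hP : ∀ᶠ s in atTop, P s) :
    ∀ᶠ L : ℝ in atTop, ∀ s : ℝ, Real.exp (L / 2) / L ^ K < s → P s := by
  filter_upwards [(tendsto_exp_half_div_rpow_atTop K).eventually
    (eventually_forall_ge_atTop.2 hP)] with L hL s hs
  exact hL s hs.le

lemma eventually_add_two_mul_log_lt {c : ℝ} (hc : 0 < c) (B : ℝ) :
    ∀ᶠ s : ℝ in atTop, B + 2 * Real.log (s ^ 2 + 1) < c * √s := by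
  have hlog := (isLittleO_log_rpow_atTop (r := 1 / 2) (by norm_num)).bound (c := c / 12)
    (by positivity)
  have hsqrt : Tendsto (fun s : ℝ => c * √s) atTop atTop :=
    Real.tendsto_sqrt_atTop.const_mul_atTop hc
  filter_upwards [hlog, eventually_ge_atTop 2, hsqrt.eventually_gt_atTop (2 * B)]
    with s hs hs2 hB
  rw [Real.norm_of_nonneg (Real.log_nonneg (by linarith)), Real.norm_of_nonneg (by positivity),
    ← Real.sqrt_eq_rpow] at hs
  have hcube : Real.log (s ^ 2 + 1) ≤ 3 * Real.log s := by
    rw [show (3 : ℝ) = (3 : ℕ) by norm_num, ← Real.log_pow]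
    exact Real.log_le_log (by positivity) (by nlinarith)
  linarith

lemma eventually_one_le_div_and_add_two_mul_log_lt {c : ℝ} (hc : 0 < c) (B : ℝ) (hK : 1 ≤ K) :
    ∀ᶠ L : ℝ in atTop, ∀ s : ℝ, Real.exp (L / 2) / L ^ (K / 2) < s →
      1 ≤ s / L ∧ 3 ≤ s / L ^ K ∧ B + 2 * Real.log (s * L ^ K + 1) < c * (s / L ^ K) := by
  filter_upwards [eventually_rpow_le_sqrt K,
    eventually_forall_of_exp_half_div_rpow_lt (eventually_add_two_mul_log_lt hc B),
    eventually_forall_of_exp_half_div_rpow_lt (eventually_ge_atTop 9), eventually_ge_atTop 1]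
    with L hsqrt hlog hnine hL1 s hs
  have hL0 : 0 < L := by linarith
  have hs0 : 0 < s := lt_trans (by positivity) hs
  have hsq : √s * √s = s := Real.mul_self_sqrt hs0.le
  have hthree : 3 ≤ √s := Real.le_sqrt_of_sq_le (by linarith [hnine s hs])
  have hLK : L ≤ L ^ K := Real.self_le_rpow_of_one_le hL1 hK
  have hdiv : √s ≤ s / L ^ K := by
    rw [le_div_iff₀ (by positivity)]
    calc √s * L ^ K ≤ √s * √s := by gcongr; exact hsqrt s hs
      _ = s := hsq
  have hLKs : L ^ K ≤ s := (hsqrt s hs).trans (by nlinarith)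
  refine ⟨(one_le_div hL0).2 (hLK.trans hLKs), hthree.trans hdiv, ?_⟩
  calc B + 2 * Real.log (s * L ^ K + 1) ≤ B + 2 * Real.log (s ^ 2 + 1) := by
        rw [pow_two]
        gcongr
    _ < c * √s := hlog s hs
    _ ≤ c * (s / L ^ K) := by gcongr

lemma eventually_mul_log_add_le (b c : ℝ) : ∀ᶠ L : ℝ in atTop, b * Real.log L + c ≤ L := by
  have hlog : (fun L : ℝ => b * Real.log L + c) =o[atTop] fun L : ℝ => L :=
    (Real.isLittleO_log_id_atTop.const_mul_left b).add
      (Asymptotics.isLittleO_const_id_atTop c)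
  filter_upwards [hlog.bound one_pos, eventually_ge_atTop 0] with L hL hL0
  rw [one_mul, Real.norm_of_nonneg hL0] at hL
  exact (Real.le_norm_self _).trans hL

lemma half_sub_mul_log_le_log {L s : ℝ} (hL : 0 < L)
    (hs : Real.exp (L / 2) / L ^ (K / 2) < s) : L / 2 - K / 2 * Real.log L ≤ Real.log s := by
  have := Real.log_le_log (by positivity) hs.le
  rwa [Real.log_div (by positivity) (by positivity), Real.log_exp, Real.log_rpow hL] at this

end Growth

section MainTerm

lemma one_sub_two_mul_sub_le {u w : ℝ} (hw0 : 0 ≤ w) (hw1 : w ≤ 1) (hu0 : 0 ≤ u) :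
    1 - 2 * u - w ≤ (1 - u) ^ 2 * (1 - w) := by
  linarith [mul_nonneg hu0 hw0, mul_nonneg (sq_nonneg u) (sub_nonneg.2 hw1)]

-- With `u = (b * ℓ + 2 * C₁) / L` each logarithm loses a factor `1 - u`, and with `w = 4 / L` the
-- sum loses a factor `1 - w`.
lemma main_term_le {P L ℓ b C₁ S T s logJ logy : ℝ} (hP : 0 ≤ P) (hL : 4 ≤ L)
    (hℓ : 1 ≤ ℓ) (hb : 0 ≤ b) (hC₁ : 0 ≤ C₁) (hbL : b * ℓ + 2 * C₁ ≤ L)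
    (hall : s ^ 2 / 2 ≤ S) (hlarge : S - s ^ 2 / L ≤ T)
    (hJ : (L - b * ℓ) / 2 ≤ logJ) (hy : (L - b * ℓ) / 2 ≤ logy) :
    (1 - (2 * b + 4 * C₁ + 4) * (ℓ / L)) * P * (L ^ 2 / 4) * S ≤
      P * (logJ - C₁) * logy * (T - s * (s / L)) := by
  have hL0 : 0 < L := by linarith
  obtain ⟨u, hu⟩ : ∃ u, u = (b * ℓ + 2 * C₁) / L := ⟨_, rfl⟩
  obtain ⟨w, hw⟩ : ∃ w, w = 4 / L := ⟨_, rfl⟩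
  have huL : L / 2 * (1 - u) = (L - b * ℓ) / 2 - C₁ := by rw [hu]; field_simp; ring
  have hu0 : 0 ≤ u := by rw [hu]; positivity
  have hu1 : u ≤ 1 := hu ▸ (div_le_one hL0).2 hbL
  have hw0 : 0 ≤ w := by rw [hw]; positivity
  have hw1 : w ≤ 1 := hw ▸ (div_le_one hL0).2 hL
  have hall0 : 0 ≤ S := le_trans (by positivity) hall
  have hfactor : 1 - (2 * b + 4 * C₁ + 4) * (ℓ / L) ≤ (1 - u) ^ 2 * (1 - w) := by
    refine le_trans ?_ (one_sub_two_mul_sub_le hw0 hw1 hu0)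
    have : 2 * u + w ≤ (2 * b + 4 * C₁ + 4) * (ℓ / L) := by
      rw [hu, hw, ← mul_div_assoc, ← mul_div_assoc, ← add_div]
      gcongr
      nlinarith
    linarith
  have hsum : (1 - w) * S ≤ T - s * (s / L) := by
    have hloss : w * (s ^ 2 / 2) ≤ w * S := by gcongr
    have : s ^ 2 / L + s * (s / L) = w * (s ^ 2 / 2) := by rw [hw]; ring
    linarith
  have : 0 ≤ 1 - u := by linarith
  have : 0 ≤ 1 - w := by linarith
  calc (1 - (2 * b + 4 * C₁ + 4) * (ℓ / L)) * P * (L ^ 2 / 4) * S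
      = (1 - (2 * b + 4 * C₁ + 4) * (ℓ / L)) * (P * (L ^ 2 / 4) * S) := by ring
    _ ≤ (1 - u) ^ 2 * (1 - w) * (P * (L ^ 2 / 4) * S) := by gcongr
    _ = P * (L / 2 * (1 - u)) * (L / 2 * (1 - u)) * ((1 - w) * S) := by ring
    _ ≤ P * (logJ - C₁) * logy * (T - s * (s / L)) := by
        have hJu : L / 2 * (1 - u) ≤ logJ - C₁ := by linarith
        have hyu : L / 2 * (1 - u) ≤ logy := by linarith
        have h0 : 0 ≤ L / 2 * (1 - u) := by positivity
        have : 0 ≤ logJ - C₁ := h0.trans hJu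
        have : 0 ≤ logy := h0.trans hyu
        gcongr

end MainTerm

section LowerBoundAtScale

variable {q v g f a : ℕ → ℕ} {c : ℝ} {s : ℕ}

lemma HasSuperadditiveInverse.inverse_apply_le (hg : HasSuperadditiveInverse (q '' Set.Ici 1) g c)
    (hgmono : Monotone g) (hqprime : ∀ p ∈ q '' Set.Ici 1, p.Prime)
    (hq : StrictMonoOn q (Set.Ici 1)) (hv : StrictMonoOn v (Set.Icc 1 s))
    (hvq : Set.MapsTo v (Set.Icc 1 s) (q '' Set.Ici 1)) {j : ℕ} (hj : j ∈ Set.Icc 1 s) :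
    g† (q j) ≤ g† (v j) := by
  have hpre : ∀ p ∈ q '' Set.Ici 1, ∃ x, 0 < x ∧ g x = p := fun p hp =>
    hg.exists_pos_eq (factorsIn_of_prime (hqprime p hp) hp) (hqprime p hp).one_lt
  exact leastPosPreimage_le_leastPosPreimage hgmono (hpre _ (Set.mem_image_of_mem q hj.1))
    (hpre _ (hvq hj)) (apply_le_of_strictMonoOn_of_mapsTo hq hv hvq hj)

lemma log_lt_of_le_mul_sq {t x D X Y : ℝ} (ht : 0 < t) (hx0 : 0 < x) (hD : 0 < D)
    (hx : x ≤ D * t ^ 2) (htX : t ≤ X) (hX : Real.log D + 2 * Real.log X < Y) : Real.log x < Y := by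
  calc Real.log x ≤ Real.log (D * t ^ 2) := Real.log_le_log hx0 hx
    _ = Real.log D + 2 * Real.log t := by
      rw [Real.log_mul hD.ne' (by positivity), Real.log_pow, Nat.cast_ofNat]
    _ ≤ Real.log D + 2 * Real.log X := by gcongr
    _ < Y := hX

lemma IsMultiplicativeLift.mul_log_sub_mul_log_le (hf : IsMultiplicativeLift (q '' Set.Ici 1) g f)
    (hg : HasSuperadditiveInverse (q '' Set.Ici 1) g c) (hc : 0 < c) (hgmono : Monotone g)
    (hq : StrictMonoOn q (Set.Ici 1)) (hv : StrictMonoOn v (Set.Icc 1 s))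
    (hvq : Set.MapsTo v (Set.Icc 1 s) (q '' Set.Ici 1)) {D P C₁ X y : ℝ} (hD : 0 < D)
    (hqD : ∀ t : ℕ, 1 ≤ t → (q t : ℝ) ≤ D * (t : ℝ) ^ 2) (hP : 0 ≤ P)
    (hgq : ∀ j : ℕ, 3 ≤ j → P * (Real.log j - C₁) * j ≤ g† (q j))
    (haX : ∀ i ∈ Set.Icc 1 s, (a i : ℝ) ≤ X) (hy : 1 ≤ y) (hX3 : 3 ≤ s / X)
    (hX : Real.log D + 2 * Real.log (s * X + 1) < c * Real.log 2 * (s / X))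
    (hC₁ : C₁ ≤ Real.log (s / X)) :
    P * (Real.log (s / X) - C₁) * Real.log y *
        (∑ j ∈ Finset.Icc ⌈s / X⌉₊ s, (j : ℝ) * a j - s * y) ≤
      Real.log (f† (∏ i ∈ Finset.Icc 1 s, v i ^ a i)) := by
  have hJ3 : 3 ≤ ⌈s / X⌉₊ := by exact_mod_cast hX3.trans (Nat.le_ceil _)
  refine hf.mul_log_mul_sum_sub_le_log hg hc hq hv hvq (by omega) (fun t ht => ?_)
    (mul_nonneg hP (by linarith)) hy fun j hj => ?_
  · have hsum : ((∑ i ∈ Finset.Icc 1 s, a i : ℕ) : ℝ) ≤ s * X := by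
      simpa using Finset.sum_le_card_nsmul (Finset.Icc 1 s) (fun i => (a i : ℝ)) X
        fun i hi => haX i (Finset.mem_Icc.1 hi)
    have htX : (t : ℝ) ≤ s * X + 1 := by
      have : (t : ℝ) ≤ ((∑ i ∈ Finset.Icc 1 s, a i + 1 : ℕ) : ℝ) := by exact_mod_cast ht.2
      push_cast at this hsum
      linarith
    have hq0 : (0 : ℝ) < q t := by
      exact_mod_cast (hf.prime_of_mem _ (Set.mem_image_of_mem q ht.1)).pos
    refine (log_lt_of_le_mul_sq (by exact_mod_cast ht.1) hq0 hD (hqD t ht.1) htX hX).trans_le ?_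
    rw [mul_right_comm]
    gcongr
    exact Nat.le_ceil _
  · have hXj : s / X ≤ j := Nat.ceil_le.1 hj.1
    calc P * (Real.log (s / X) - C₁) * j ≤ P * (Real.log j - C₁) * j := by
          gcongr
      _ ≤ g† (q j) := hgq j (hJ3.trans hj.1)
      _ ≤ g† (v j) := by
          have hj1 : j ∈ Set.Icc 1 s := ⟨by linarith [hj.1], hj.2⟩
          exact_mod_cast hg.inverse_apply_le hgmono hf.prime_of_mem hq hv hvq hj1

lemma IsMultiplicativeLift.eventually_mul_sum_le_log {κ d K : ℝ}
    (hf : IsMultiplicativeLift (q '' Set.Ici 1) g f)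
    (hg : HasSuperadditiveInverse (q '' Set.Ici 1) g c) (hc : 0 < c) (hgmono : Monotone g)
    (hq : StrictMonoOn q (Set.Ici 1)) (hκ : 0 < κ)
    (hqasymp : ∃ A : ℝ, ∀ j : ℕ, 2 ≤ j →
      |(q j : ℝ) - κ * j * (Real.log j + Real.log (Real.log j))| ≤ A * (κ * j))
    (hd : 0 < d)
    (hgasymp : ∃ B : ℝ, ∀ j : ℕ, 1 ≤ j →
      |(g† (q j) : ℝ) - d * q j| ≤ B * (q j : ℝ) / Real.log (q j)) (hK : 1 ≤ K) :
    ∃ C : ℝ, 0 < C ∧ ∀ᶠ L : ℝ in atTop, ∀ (s : ℕ) (v a : ℕ → ℕ),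
      Set.MapsTo v (Set.Icc 1 s) (q '' Set.Ici 1) → StrictMonoOn v (Set.Icc 1 s) →
      (∀ i ∈ Set.Icc 1 s, 1 ≤ a i ∧ (a i : ℝ) ≤ L ^ K) →
      Real.exp (L / 2) / L ^ (K / 2) < s →
        (1 - C * (Real.log L / L)) * (d * κ) * (L ^ 2 / 4) *
            (∑ j ∈ Finset.Icc 1 s, (j : ℝ) * a j) ≤
          Real.log (f† (∏ i ∈ Finset.Icc 1 s, v i ^ a i)) := by
  obtain ⟨D, hD, hqD⟩ := exists_forall_le_mul_sq hκ hqasymp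
  have hq1 : 1 ≤ q 1 := (hf.prime_of_mem _ ⟨1, Set.mem_Ici.2 le_rfl, rfl⟩).one_le
  obtain ⟨C₁, hC₁, hgq⟩ := exists_forall_mul_log_sub_mul_le hκ hd
    (fun _ => le_apply_of_strictMonoOn_Ici_one hq hq1) hqasymp hgasymp
  refine ⟨2 * (3 * K) + 4 * C₁ + 4, by positivity, ?_⟩
  filter_upwards [eventually_one_le_div_and_add_two_mul_log_lt
      (mul_pos hc (Real.log_pos one_lt_two)) (Real.log D) hK,
    eventually_mul_log_add_le (3 * K) (2 * C₁), eventually_ge_atTop 4,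
    Real.tendsto_log_atTop.eventually_ge_atTop 1]
    with L hscales hloss hL4 hlogL s v a hvq hv ha hs
  have hL0 : 0 < L := by linarith
  obtain ⟨hy, hX3, hX⟩ := hscales s hs
  have hs0 : (0 : ℝ) < s := lt_trans (by positivity) hs
  have hLK : L ≤ L ^ K := Real.self_le_rpow_of_one_le (by linarith) hK
  have hlogX : (L - 3 * K * Real.log L) / 2 ≤ Real.log (s / L ^ K) := by
    rw [Real.log_div (by positivity) (by positivity), Real.log_rpow hL0]
    linarith [half_sub_mul_log_le_log hL0 hs]
  have hlogy : (L - 3 * K * Real.log L) / 2 ≤ Real.log (s / L) := hlogX.trans (by gcongr)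
  have hlarge : ∑ j ∈ Finset.Icc 1 s, (j : ℝ) * a j - (s : ℝ) ^ 2 / L ≤
      ∑ j ∈ Finset.Icc ⌈s / L ^ K⌉₊ s, (j : ℝ) * a j :=
    le_trans (by gcongr) (sum_mul_sub_sq_div_le (by positivity) fun i hi => (ha i hi).2)
  exact (main_term_le (mul_pos hd hκ).le hL4 hlogL (by positivity) hC₁ hloss
    (sq_div_two_le_sum_mul fun i hi => (ha i hi).1) hlarge hlogX hlogy).trans
    (hf.mul_log_sub_mul_log_le hg hc hgmono hq hv hvq hD hqD (mul_pos hd hκ).le hgq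
      (fun i hi => (ha i hi).2) hy hX3 hX (by linarith))

end LowerBoundAtScale

theorem log_minimal_preimage_lower_bound_general
    (q : ℕ → ℕ) (g f gdag : ℕ → ℕ) (κ cstar cdag K : ℝ)
    (hqprime : ∀ j : ℕ, 1 ≤ j → (q j).Prime)
    (hqmono : ∀ j : ℕ, 1 ≤ j → q j < q (j + 1))
    (hκ : 0 < κ)
    (hqasymp : ∃ A : ℝ, ∀ j : ℕ, 2 ≤ j →
      |(q j : ℝ) - κ * j * (Real.log j + Real.log (Real.log j))| ≤ A * (κ * j))
    (hg0 : g 0 = 1) (hgmono : Monotone g)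
    (hgrange : ∀ m : ℕ, 0 < m → FactorsIn (q '' Set.Ici 1) m → ∃ x : ℕ, g x = m)
    (hgdagdef : ∀ y : ℕ, gdag y = sInf {x : ℕ | 0 < x ∧ g x = y})
    (hcstar : 0 < cstar)
    (hsuper : ∀ a b : ℕ, FactorsIn (q '' Set.Ici 1) a → FactorsIn (q '' Set.Ici 1) b →
      q 1 ≤ a → a ≤ b → (gdag b : ℝ) + cstar * b * gdag a ≤ gdag (a * b))
    (hcdag : 0 < cdag)
    (hgdagasymp : ∃ B : ℝ, ∀ j : ℕ, 1 ≤ j →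
      |(gdag (q j) : ℝ) - cdag * q j| ≤ B * (q j : ℝ) / Real.log (q j))
    (hf1 : f 1 = 1)
    (hfmult : ∀ m₁ m₂ : ℕ, Nat.Coprime m₁ m₂ → f (m₁ * m₂) = f m₁ * f m₂)
    (hfQ : ∀ p ν : ℕ, p.Prime → p ∈ q '' Set.Ici 1 → 1 ≤ ν → f (p ^ ν) = g ν)
    (hfnotQ : ∀ p ν : ℕ, p.Prime → p ∉ q '' Set.Ici 1 → 1 ≤ ν →
      f (p ^ ν) = 0 ∨ f (p ^ ν) = 1)
    (hK : 1 ≤ K) :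
    ∃ C : ℝ, 0 < C ∧ ∃ n₀ : ℕ, ∀ n : ℕ, n₀ ≤ n → ∀ s : ℕ, ∀ v a : ℕ → ℕ,
      (∀ i : ℕ, 1 ≤ i → i ≤ s → v i ∈ q '' Set.Ici 1) →
      (∀ i : ℕ, 1 ≤ i → i + 1 ≤ s → v i < v (i + 1)) →
      (∀ i : ℕ, 1 ≤ i → i ≤ s → 1 ≤ a i ∧ (a i : ℝ) ≤ Real.log (Real.log n) ^ K) →
      √(Real.log n) / Real.log (Real.log n) ^ (K / 2) < (s : ℝ) →
      ∀ mN : ℕ, mN = sInf {m : ℕ | 0 < m ∧ f m = ∏ i ∈ Finset.Icc 1 s, v i ^ a i} →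
        (1 - C * (Real.log (Real.log (Real.log n)) / Real.log (Real.log n))) *
            (cdag * κ) * (Real.log (Real.log n) ^ 2 / 4) *
            (∑ j ∈ Finset.Icc 1 s, (j : ℝ) * a j) ≤
          Real.log mN := by
  obtain rfl : gdag = leastPosPreimage g := funext hgdagdef
  have hq : StrictMonoOn q (Set.Ici 1) :=
    strictMonoOn_of_lt_add_one Set.ordConnected_Ici fun j _ hj _ => hqmono j hj
  have hq1 : q 1 ∈ lowerBounds (q '' Set.Ici 1) :=
    Set.forall_mem_image.2 fun j hj => hq.monotoneOn (Set.mem_Ici.2 le_rfl) hj hj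
  have hlift : IsMultiplicativeLift (q '' Set.Ici 1) g f :=
    ⟨Set.forall_mem_image.2 hqprime, hg0, hf1, hfmult, hfQ, hfnotQ⟩
  have hinverse : HasSuperadditiveInverse (q '' Set.Ici 1) g cstar :=
    ⟨hg0, hgrange, fun a b ha hb h1 => hsuper a b ha hb (ha.le_of_lowerBound hq1 h1)⟩
  obtain ⟨C, hC, hbound⟩ := hlift.eventually_mul_sum_le_log hinverse hcstar hgmono hq hκ hqasymp
    hcdag hgdagasymp hK
  have hlog : Tendsto (fun n : ℕ => Real.log n) atTop atTop :=
    Real.tendsto_log_atTop.comp tendsto_natCast_atTop_atTop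
  obtain ⟨n₀, hn₀⟩ := eventually_atTop.1
    (((Real.tendsto_log_atTop.comp hlog).eventually hbound).and (hlog.eventually_gt_atTop 0))
  refine ⟨C, hC, n₀, fun n hn s v a hvQ hvmono ha hs mN hmN => hmN ▸ ?_⟩
  obtain ⟨hn, hlogn⟩ := hn₀ n hn
  exact hn s v a (fun i hi => hvQ i hi.1 hi.2)
    (strictMonoOn_of_lt_add_one Set.ordConnected_Icc fun i _ hi hi' => hvmono i hi.1 hi'.2)
    (fun i hi => ha i hi.1 hi.2)
    (by rwa [Function.comp_apply, Real.exp_half, Real.exp_log hlogn])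

/-- Under the standing hypotheses, with `ε` from (A.5) and `K = max{6, 2/ε}`: there are
constants `C > 0` and `n₀` such that for all `n ≥ n₀` and all `N″ = v₁^{a₁}···v_s^{a_s}`
with `v₁ < … < v_s` in `Q`, `1 ≤ a_i ≤ (log₂ n)^K` and `s > √(log n)/(log₂ n)^{K/2}`,
one has `log m_{N″} ≥ (1 − C·log₃ n/log₂ n)·c_†·κ·((log₂ n)²/4)·∑_{j ≤ s} j·a_j`,
where `m_{N″}` is the least positive integer `m` with `f(m) = N″`. -/
theorem log_minimal_preimage_lower_bound
    (q : ℕ → ℕ) (g f gdag : ℕ → ℕ) (κ cstar cf cdag ε : ℝ)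
    -- the strictly increasing sequence of primes `q_1 < q_2 < …` with its asymptotics (A.1)
    (hqprime : ∀ j : ℕ, 1 ≤ j → (q j).Prime)
    (hqmono : ∀ j : ℕ, 1 ≤ j → q j < q (j + 1))
    (hκ : 0 < κ)
    (hqasymp : ∃ A : ℝ, ∀ j : ℕ, 2 ≤ j →
      |(q j : ℝ) - κ * j * (Real.log j + Real.log (Real.log j))| ≤ A * (κ * j))
    -- `g` is monotonically increasing with `g(0) = 1` (A.2)
    (hg0 : g 0 = 1) (hgmono : Monotone g)
    -- the image of `g` contains the monoid `⟨Q⟩` generated by `Q = {q_j : j ≥ 1}` (A.3)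
    (hgrange : ∀ m : ℕ, 0 < m → (∀ p : ℕ, p.Prime → p ∣ m → ∃ j, 1 ≤ j ∧ q j = p) →
      ∃ x : ℕ, g x = m)
    -- `gdag` is the pseudo-inverse `g†`
    (hgdagdef : ∀ y : ℕ, gdag y = sInf {x : ℕ | 0 < x ∧ g x = y})
    -- the superadditivity assumption (A.4)
    (hcstar : 1 / (q 1 : ℝ) < cstar)
    (hsuper : ∀ a b : ℕ,
      (∀ p : ℕ, p.Prime → p ∣ a → ∃ j, 1 ≤ j ∧ q j = p) →
      (∀ p : ℕ, p.Prime → p ∣ b → ∃ j, 1 ≤ j ∧ q j = p) →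
      q 1 ≤ a → a ≤ b →
      (gdag b : ℝ) + cstar * b * gdag a ≤ gdag (a * b))
    -- the growth assumption `g(i)/g(i−1) = 1 + O(i^{−1/2−ε})` (A.5)
    (hε : 0 < ε)
    (hgratio : ∃ B : ℝ, ∀ i : ℕ, 1 ≤ i →
      |(g i : ℝ) / (g (i - 1) : ℝ) - 1| ≤ B * (i : ℝ) ^ (-(1 / 2 : ℝ) - ε))
    -- the sublinearity assumption `g(x) ≤ c_f·x` (A.6)
    (hcf : 0 < cf)
    (hgsub : ∀ x : ℕ, 1 ≤ x → (g x : ℝ) ≤ cf * x)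
    -- the assumption `g†(q) = c_†·q + O(q/log q)` for `q ∈ Q` (A.7)
    (hcdag : 0 < cdag)
    (hgdagasymp : ∃ B : ℝ, ∀ j : ℕ, 1 ≤ j →
      |(gdag (q j) : ℝ) - cdag * q j| ≤ B * (q j : ℝ) / Real.log (q j))
    -- `f` is multiplicative with `f(p^ν) = g(ν)` for `p ∈ Q`, `f(p^ν) ∈ {0,1}` otherwise
    (hf0 : f 0 = 1) (hf1 : f 1 = 1)
    (hfmult : ∀ m₁ m₂ : ℕ, Nat.Coprime m₁ m₂ → f (m₁ * m₂) = f m₁ * f m₂)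
    (hfQ : ∀ p ν : ℕ, p.Prime → (∃ j, 1 ≤ j ∧ q j = p) → 1 ≤ ν → f (p ^ ν) = g ν)
    (hfnotQ : ∀ p ν : ℕ, p.Prime → ¬(∃ j, 1 ≤ j ∧ q j = p) → 1 ≤ ν →
      f (p ^ ν) = 0 ∨ f (p ^ ν) = 1) :
    ∃ C : ℝ, 0 < C ∧ ∃ n₀ : ℕ, ∀ n : ℕ, n₀ ≤ n → ∀ s : ℕ, ∀ v a : ℕ → ℕ,
      (∀ i : ℕ, 1 ≤ i → i ≤ s → ∃ j, 1 ≤ j ∧ q j = v i) →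
      (∀ i : ℕ, 1 ≤ i → i + 1 ≤ s → v i < v (i + 1)) →
      (∀ i : ℕ, 1 ≤ i → i ≤ s →
        1 ≤ a i ∧ (a i : ℝ) ≤ Real.log (Real.log n) ^ (max 6 (2 / ε))) →
      Real.sqrt (Real.log n) / Real.log (Real.log n) ^ (max 6 (2 / ε) / 2) < (s : ℝ) →
      ∀ mN : ℕ, mN = sInf {m : ℕ | 0 < m ∧ f m = ∏ i ∈ Finset.Icc 1 s, v i ^ a i} →
        (1 - C * (Real.log (Real.log (Real.log n)) / Real.log (Real.log n))) *
            (cdag * κ) * (Real.log (Real.log n) ^ 2 / 4) *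
            (∑ j ∈ Finset.Icc 1 s, (j : ℝ) * a j) ≤
          Real.log mN := by
  exact log_minimal_preimage_lower_bound_general q g f gdag κ cstar cdag _ hqprime hqmono hκ hqasymp
    hg0 hgmono hgrange hgdagdef ((by positivity : 0 ≤ 1 / (q 1 : ℝ)).trans_lt hcstar) hsuper hcdag
    hgdagasymp hf1 hfmult hfQ hfnotQ (le_max_of_le_left (by norm_num))
end
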